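/- Let G be a two-edge-connected cubic graph that can be drawn in the plane with exactly one crossing. Then G is three-edge-colourable. -/

import Mathlib

open SimpleGraph

/-- A drawing of a simple graph in the plane: each vertex gets a point, each edge a
continuous injective arc (parametrized on `[0,1]`) joining the images of its two ends,
and arcs pass through vertex points only at their endpoints. -/
structure Drawing {V : Type*} (G : SimpleGraph V) where
  vpos : V → ℝ × ℝ
  vinj : Function.Injective vpos
  arc : G.edgeSet → ℝ → ℝ × ℝ
  cont : ∀ e, ContinuousOn (arc e) (Set.Icc 0 1)
  injOn : ∀ e, Set.InjOn (arc e) (Set.Icc 0 1)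
  ends : ∀ e : G.edgeSet, ∃ u v : V, (e : Sym2 V) = s(u, v) ∧
      arc e 0 = vpos u ∧ arc e 1 = vpos v
  interiorAvoidsVertices : ∀ e : G.edgeSet, ∀ w : V, ∀ t ∈ Set.Ioo (0 : ℝ) 1,
      arc e t ≠ vpos w

/-- The interior of the arc of an edge in a drawing. -/
def Drawing.arcInt {V : Type*} {G : SimpleGraph V} (d : Drawing G) (e : G.edgeSet) :
    Set (ℝ × ℝ) :=
  d.arc e '' Set.Ioo (0 : ℝ) 1

/-- A drawing is planar (crossing-free) if the interiors of the arcs of distinct edges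
are disjoint. -/
def Drawing.IsPlanar {V : Type*} {G : SimpleGraph V} (d : Drawing G) : Prop :=
  ∀ e f : G.edgeSet, e ≠ f → d.arcInt e ∩ d.arcInt f = ∅

/-- A drawing with exactly one crossing: exactly one pair of distinct edges has
intersecting interiors, and those interiors meet in exactly one point. -/
def Drawing.OneCrossing {V : Type*} {G : SimpleGraph V} (d : Drawing G) : Prop :=
  ∃ e f : G.edgeSet, e ≠ f ∧ (∃! p, p ∈ d.arcInt e ∩ d.arcInt f) ∧
    ∀ e' f' : G.edgeSet, e' ≠ f' → ({e', f'} : Set G.edgeSet) ≠ {e, f} →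
      d.arcInt e' ∩ d.arcInt f' = ∅

/-- A graph is planar if it admits a crossing-free drawing in the plane. -/
def IsPlanarGraph {V : Type*} (G : SimpleGraph V) : Prop :=
  ∃ d : Drawing G, d.IsPlanar

/-- A graph is two-edge-connected if it is connected and has no cut-edge (bridge). -/
def TwoEdgeConnected {V : Type*} (G : SimpleGraph V) : Prop :=
  G.Connected ∧ ∀ e ∈ G.edgeSet, ¬ G.IsBridge e

/-- A graph is three-edge-colourable if its edges can be coloured with three colours so
that edges sharing a vertex receive distinct colours. -/
def ThreeEdgeColorable {V : Type*} (G : SimpleGraph V) : Prop :=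
  ∃ c : G.edgeSet → Fin 3, ∀ e f : G.edgeSet, e ≠ f →
    (∃ v : V, v ∈ (e : Sym2 V) ∧ v ∈ (f : Sym2 V)) → c e ≠ c f

section Plane

open Complex

/-- A nowhere vanishing continuous function on the plane has a continuous logarithm. -/
theorem exists_continuous_log {f : ℝ × ℝ → ℂ} (hf : Continuous f) (h0 : ∀ x, f x ≠ 0) :
    ∃ L : ℝ × ℝ → ℂ, Continuous L ∧ ∀ x, exp (L x) = f x := by
  let F : C(ℝ × ℝ, {z : ℂ // z ≠ 0}) := ⟨fun x => ⟨f x, h0 x⟩, by fun_prop⟩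
  obtain ⟨L, ⟨-, hL⟩, -⟩ := isCoveringMap_exp.existsUnique_continuousMap_lifts F (0, 0)
    (log (f (0, 0))) (Subtype.ext (exp_log (h0 _)))
  exact ⟨L, L.continuous, fun x => congrArg Subtype.val (congrFun hL x)⟩

theorem im_sub_eq_arg_sub_arg {h : ℝ → ℂ} (hh : Continuous h) {u : ℂ}
    (hu : ∀ t, 0 < (u * exp (h t)).re) (s t : ℝ) :
    (h t).im - (h s).im = (u * exp (h t)).arg - (u * exp (h s)).arg := by
  have hc : Continuous fun t => log (u * exp (h t)) :=
    Continuous.clog (by fun_prop) fun t => Or.inl (hu t)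
  have hu0 : u ≠ 0 := by rintro rfl; simpa using hu 0
  have key : (fun t => h t - log (u * exp (h t))) = fun _ => h s - log (u * exp (h s)) := by
    refine isCoveringMap_exp.eq_of_comp_eq (hh.sub hc) continuous_const ?_ s rfl
    funext t
    refine Subtype.ext ?_
    have hne (t) : u * exp (h t) ≠ 0 := mul_ne_zero hu0 (exp_ne_zero _)
    change exp _ = exp _
    rw [exp_sub, exp_sub, exp_log (hne _), exp_log (hne _)]
    field_simp
  have := congrArg Complex.im (congrFun key t)
  simp only [sub_im, log_im] at this
  linarith

theorem arg_one_sub_exp {θ : ℝ} (h0 : 0 < θ) (h1 : θ < 2 * Real.pi) :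
    (1 - exp (θ * I)).arg = (θ - Real.pi) / 2 := by
  have hs : 0 < Real.sin (θ / 2) := Real.sin_pos_of_pos_of_lt_pi (by linarith) (by linarith)
  have : 1 - exp (θ * I) = ((2 * Real.sin (θ / 2) : ℝ) : ℂ) *
      (cos (((θ - Real.pi) / 2 : ℝ) : ℂ) + sin (((θ - Real.pi) / 2 : ℝ) : ℂ) * I) := by
    have e1 : Real.cos ((θ - Real.pi) / 2) = Real.sin (θ / 2) := by
      rw [← Real.cos_pi_div_two_sub, ← Real.cos_neg]; ring_nf
    have e2 : Real.sin ((θ - Real.pi) / 2) = - Real.cos (θ / 2) := by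
      rw [← Real.sin_pi_div_two_sub, ← Real.sin_neg]; ring_nf
    have c2 : Real.cos θ = 1 - 2 * Real.sin (θ / 2) ^ 2 := by
      have := Real.cos_two_mul (θ / 2)
      rw [mul_div_cancel₀ θ two_ne_zero] at this
      linarith [Real.sin_sq_add_cos_sq (θ / 2)]
    have s2 : Real.sin θ = 2 * Real.sin (θ / 2) * Real.cos (θ / 2) := by
      rw [← Real.sin_two_mul]; ring_nf
    rw [← ofReal_cos, ← ofReal_sin, e1, e2, exp_mul_I, ← ofReal_cos, ← ofReal_sin, c2, s2]
    push_cast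
    ring
  rw [this, arg_mul_cos_add_sin_mul_I (by linarith)]
  constructor <;> linarith [Real.pi_pos]

theorem arg_conj_mul_sub {α β : ℝ} (h0 : α < β) (h1 : β < α + 2 * Real.pi) :
    (exp (-(α * I)) * (exp (α * I) - exp (β * I))).arg = (β - α - Real.pi) / 2 := by
  rw [← arg_one_sub_exp (θ := β - α) (by linarith) (by linarith), mul_sub, ← exp_add, ← exp_add]
  congr 2
  · simp
  · push_cast; congr 1; ring

theorem re_conj_mul_sub_pos {α : ℝ} {z : ℂ} (hz : ‖z‖ ≤ 1) (hne : exp (α * I) - z ≠ 0) :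
    0 < (exp (-(α * I)) * (exp (α * I) - z)).re := by
  have h1 : exp (-(α * I)) * (exp (α * I) - z) = 1 - exp (-(α * I)) * z := by
    rw [mul_sub, ← exp_add]; simp
  have hn : ‖exp (-(α * I)) * z‖ ≤ 1 := by
    have : ‖exp (-(α * I))‖ = 1 := by
      have := norm_exp_ofReal_mul_I (-α); simpa using this
    rwa [norm_mul, this, one_mul]
  have hne' : exp (-(α * I)) * z ≠ 1 := fun h => by
    rw [h, sub_self] at h1
    exact (mul_ne_zero (exp_ne_zero _) hne) h1
  rw [h1]
  generalize exp (-(α * I)) * z = w at hn hne'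
  have h2 : w.re ≤ ‖w‖ := re_le_norm w
  rw [sub_re, one_re, sub_pos]
  refine lt_of_le_of_ne (h2.trans hn) fun h => hne' ?_
  have h3 : w.re = ‖w‖ := le_antisymm h2 (by rw [h]; exact hn)
  have h4 := (Complex.re_eq_norm).1 h3
  rw [Complex.le_def] at h4
  exact Complex.ext (by simpa using h) (by simpa using h4.2.symm)

theorem paths_in_disc_meet {α β γ δ : ℝ} (h1 : α < γ) (h2 : γ < β) (h3 : β < δ)
    (h4 : δ < α + 2 * Real.pi) (p : Path (exp (α * I)) (exp (β * I)))
    (q : Path (exp (γ * I)) (exp (δ * I))) (hp : ∀ t, ‖p t‖ ≤ 1) (hq : ∀ t, ‖q t‖ ≤ 1) :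
    ∃ s t, p s = q t := by
  by_contra! hne
  have hp' (t : ℝ) : ‖p.extend t‖ ≤ 1 := hp _
  have hq' (t : ℝ) : ‖q.extend t‖ ≤ 1 := hq _
  have hne' (s t : ℝ) : p.extend s - q.extend t ≠ 0 := sub_ne_zero.2 (hne _ _)
  obtain ⟨L, hL, hexp⟩ := exists_continuous_log
    (f := fun x => p.extend x.1 - q.extend x.2) (by fun_prop) fun x => hne' _ _
  have k1 := im_sub_eq_arg_sub_arg (h := fun t => L (0, t)) (by fun_prop)
    (u := exp (-(α * I))) (fun t => by
      have := hne' 0 t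
      rw [hexp]; simp only [Path.extend_zero] at this ⊢
      exact re_conj_mul_sub_pos (hq' t) this) 0 1
  have k2 := im_sub_eq_arg_sub_arg (h := fun t => L (1, t)) (by fun_prop)
    (u := exp (-(β * I))) (fun t => by
      have := hne' 1 t
      rw [hexp]; simp only [Path.extend_one] at this ⊢
      exact re_conj_mul_sub_pos (hq' t) this) 0 1
  have k3 := im_sub_eq_arg_sub_arg (h := fun t => L (t, 0)) (by fun_prop)
    (u := -exp (-(γ * I))) (fun t => by
      have := neg_ne_zero.2 (hne' t 0)
      rw [hexp]; simp only [Path.extend_zero, neg_sub, neg_mul_comm] at this ⊢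
      exact re_conj_mul_sub_pos (hp' t) this) 0 1
  have k4 := im_sub_eq_arg_sub_arg (h := fun t => L (t, 1)) (by fun_prop)
    (u := -exp (-(δ * I))) (fun t => by
      have := neg_ne_zero.2 (hne' t 1)
      rw [hexp]; simp only [Path.extend_one, neg_sub, neg_mul_comm] at this ⊢
      exact re_conj_mul_sub_pos (hp' t) this) 0 1
  have per (x : ℝ) : exp (x * I) = exp ((x + 2 * Real.pi : ℝ) * I) := by
    push_cast; rw [add_mul, exp_add, exp_two_pi_mul_I, mul_one]
  simp only [hexp, Path.extend_zero, Path.extend_one, neg_mul_comm, neg_sub] at k1 k2 k3 k4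
  rw [arg_conj_mul_sub (by linarith) (by linarith), arg_conj_mul_sub h1 (by linarith)] at k1
  rw [per γ, arg_conj_mul_sub (by linarith) (by linarith),
    arg_conj_mul_sub (by linarith) (by linarith)] at k2
  rw [per α, arg_conj_mul_sub (by linarith) (by linarith),
    arg_conj_mul_sub (by linarith) (by linarith)] at k3
  rw [per α, per β, arg_conj_mul_sub (by linarith) (by linarith),
    arg_conj_mul_sub (by linarith) (by linarith)] at k4
  linarith [Real.pi_pos]

/-- The squared Euclidean distance of two points of the plane. -/
def sqDist (p z : ℝ × ℝ) : ℝ := (z.1 - p.1) ^ 2 + (z.2 - p.2) ^ 2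

/-- The signed area which tells on which side of the line through `a` and `b` the point `z` is. -/
def side (a b z : ℝ × ℝ) : ℝ := (b.1 - a.1) * (z.2 - a.2) - (b.2 - a.2) * (z.1 - a.1)

theorem side_circle (p : ℝ × ℝ) (r α β γ : ℝ) :
    side (p.1 + r * Real.cos α, p.2 + r * Real.sin α) (p.1 + r * Real.cos β, p.2 + r * Real.sin β)
      (p.1 + r * Real.cos γ, p.2 + r * Real.sin γ) =
    4 * r ^ 2 * Real.sin ((β - α) / 2) * Real.sin ((γ - α) / 2) * Real.sin ((γ - β) / 2) := by
  obtain ⟨x, rfl⟩ : ∃ x, β = α + 2 * x := ⟨(β - α) / 2, by ring⟩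
  obtain ⟨y, rfl⟩ : ∃ y, γ = α + 2 * x + 2 * y := ⟨(γ - (α + 2 * x)) / 2, by ring⟩
  have e1 : (α + 2 * x - α) / 2 = x := by ring
  have e2 : (α + 2 * x + 2 * y - α) / 2 = x + y := by ring
  have e3 : (α + 2 * x + 2 * y - (α + 2 * x)) / 2 = y := by ring
  rw [e1, e2, e3]
  have h1 : side (p.1 + r * Real.cos α, p.2 + r * Real.sin α)
      (p.1 + r * Real.cos (α + 2 * x), p.2 + r * Real.sin (α + 2 * x))
      (p.1 + r * Real.cos (α + 2 * x + 2 * y), p.2 + r * Real.sin (α + 2 * x + 2 * y)) =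
      r ^ 2 * (Real.sin ((α + 2 * x + 2 * y) - (α + 2 * x)) - Real.sin ((α + 2 * x + 2 * y) - α) +
        Real.sin ((α + 2 * x) - α)) := by
    rw [Real.sin_sub, Real.sin_sub, Real.sin_sub, side]
    ring
  have e4 : α + 2 * x + 2 * y - (α + 2 * x) = 2 * y := by ring
  have e5 : α + 2 * x + 2 * y - α = 2 * x + 2 * y := by ring
  have e6 : α + 2 * x - α = 2 * x := by ring
  rw [h1, e4, e5, e6, Real.sin_add, Real.sin_add, Real.cos_two_mul', Real.cos_two_mul',
    Real.sin_two_mul, Real.sin_two_mul, Real.cos_sq', Real.cos_sq']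
  ring

theorem exists_angle {p z : ℝ × ℝ} {r : ℝ} (hr : 0 < r) (h : sqDist p z = r ^ 2) (α : ℝ) :
    ∃ β, α ≤ β ∧ β < α + 2 * Real.pi ∧
      z = (p.1 + r * Real.cos β, p.2 + r * Real.sin β) := by
  obtain ⟨θ, h1, h2⟩ : ∃ θ, z.1 - p.1 = r * Real.cos θ ∧ z.2 - p.2 = r * Real.sin θ := by
    have hn : ‖(⟨z.1 - p.1, z.2 - p.2⟩ : ℂ)‖ = r := by
      rw [← sq_eq_sq₀ (norm_nonneg _) hr.le, ← h, sqDist, Complex.sq_norm, Complex.normSq_mk]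
      ring
    refine ⟨Complex.arg ⟨z.1 - p.1, z.2 - p.2⟩, ?_, ?_⟩
    · have := Complex.norm_mul_cos_arg ⟨z.1 - p.1, z.2 - p.2⟩
      rw [hn] at this; exact this.symm
    · have := Complex.norm_mul_sin_arg ⟨z.1 - p.1, z.2 - p.2⟩
      rw [hn] at this; exact this.symm
  have hm := toIcoMod_mem_Ico Real.two_pi_pos α θ
  refine ⟨toIcoMod Real.two_pi_pos α θ, hm.1, hm.2, ?_⟩
  rw [toIcoMod, zsmul_eq_mul, Real.cos_sub_int_mul_two_pi, Real.sin_sub_int_mul_two_pi, ← h1, ← h2]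
  simp

/-- Outside an open disc, two paths which join crossing pairs of boundary points meet. -/
theorem paths_outside_disc_meet {p a b c d : ℝ × ℝ} {r : ℝ} (hr : 0 < r)
    (ha : sqDist p a = r ^ 2) (hb : sqDist p b = r ^ 2) (hc : sqDist p c = r ^ 2)
    (hd : sqDist p d = r ^ 2) (hcross : side a b c * side a b d < 0) (P : Path a b) (Q : Path c d)
    (hP : ∀ t, r ^ 2 ≤ sqDist p (P t)) (hQ : ∀ t, r ^ 2 ≤ sqDist p (Q t)) :
    ∃ s t, P s = Q t := by
  obtain ⟨α, -, -, rfl⟩ := exists_angle hr ha 0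
  obtain ⟨β, hβ, hβ', rfl⟩ := exists_angle hr hb α
  obtain ⟨γ, hγ, hγ', rfl⟩ := exists_angle hr hc α
  obtain ⟨δ, hδ, hδ', rfl⟩ := exists_angle hr hd α
  rw [side_circle, side_circle] at hcross
  let ψ : ℝ × ℝ → ℂ := fun z => ⟨(z.1 - p.1) / r, -((z.2 - p.2) / r)⟩
  have hψc : Continuous ψ := by
    have : ψ = fun z : ℝ × ℝ =>
        (((z.1 - p.1) / r : ℝ) : ℂ) + ((-((z.2 - p.2) / r) : ℝ) : ℂ) * I := by
      funext z; exact Complex.ext (by simp [ψ]) (by simp [ψ])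
    rw [this]; fun_prop
  have hψn (z) : ‖ψ z‖ ^ 2 = sqDist p z / r ^ 2 := by
    rw [Complex.sq_norm, Complex.normSq_mk, sqDist]; field_simp
  have hψ1 {z} (hz : r ^ 2 ≤ sqDist p z) : 1 ≤ ‖ψ z‖ := by
    rw [← one_le_sq_iff₀ (norm_nonneg _), hψn, le_div_iff₀ (by positivity)]; linarith
  have hψ0 {z} (hz : r ^ 2 ≤ sqDist p z) : ψ z ≠ 0 := by
    rw [← norm_pos_iff]; linarith [hψ1 hz]
  have hψi (θ : ℝ) : (ψ (p.1 + r * Real.cos θ, p.2 + r * Real.sin θ))⁻¹ = exp (θ * I) := by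
    rw [inv_eq_iff_eq_inv, ← exp_neg, ← neg_mul, ← ofReal_neg, exp_mul_I]
    apply Complex.ext <;> simp [ψ, hr.ne', ← ofReal_cos, ← ofReal_sin]
  have inj {z w} (h : (ψ z)⁻¹ = (ψ w)⁻¹) : z = w := by
    have := inv_injective h
    simp only [ψ, Complex.mk.injEq, neg_inj] at this
    field_simp at this
    exact Prod.ext (by linarith [this.1]) (by linarith [this.2])
  let path {θ η : ℝ} (R : Path (p.1 + r * Real.cos θ, p.2 + r * Real.sin θ)
      (p.1 + r * Real.cos η, p.2 + r * Real.sin η)) (hR : ∀ t, r ^ 2 ≤ sqDist p (R t)) :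
      Path (exp (θ * I)) (exp (η * I)) :=
    ⟨⟨fun t => (ψ (R t))⁻¹, (hψc.comp R.continuous).inv₀ fun t => hψ0 (hR t)⟩,
      by simpa using hψi θ, by simpa using hψi η⟩
  have hpath {θ η : ℝ} (R : Path (p.1 + r * Real.cos θ, p.2 + r * Real.sin θ)
      (p.1 + r * Real.cos η, p.2 + r * Real.sin η)) (hR : ∀ t, r ^ 2 ≤ sqDist p (R t)) (t) :
      ‖path R hR t‖ ≤ 1 := by
    change ‖(ψ (R t))⁻¹‖ ≤ 1
    rw [norm_inv]; exact inv_le_one_of_one_le₀ (hψ1 (hR t))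
  have hs {x : ℝ} (h : α ≤ x) (h' : x < α + 2 * Real.pi) : 0 ≤ Real.sin ((x - α) / 2) :=
    Real.sin_nonneg_of_nonneg_of_le_pi (by linarith) (by linarith)
  have h3 : Real.sin ((γ - β) / 2) * Real.sin ((δ - β) / 2) < 0 := by
    by_contra! h
    refine hcross.not_ge ?_
    have := mul_nonneg (mul_nonneg (hs hγ hγ') (hs hδ hδ')) h
    have : 0 ≤ (4 * r ^ 2 * Real.sin ((β - α) / 2)) ^ 2 *
      (Real.sin ((γ - α) / 2) * Real.sin ((δ - α) / 2) *
        (Real.sin ((γ - β) / 2) * Real.sin ((δ - β) / 2))) := mul_nonneg (sq_nonneg _) this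
    linarith
  have hαβ : α < β := lt_of_le_of_ne hβ fun h => by simp [h] at hcross
  have hαγ : α < γ := lt_of_le_of_ne hγ fun h => by simp [h] at hcross
  have hαδ : α < δ := lt_of_le_of_ne hδ fun h => by simp [h] at hcross
  have hneg {x : ℝ} (h : x < α + 2 * Real.pi) (h' : Real.sin ((x - β) / 2) < 0) : x < β := by
    by_contra! hx
    exact h'.not_ge (Real.sin_nonneg_of_nonneg_of_le_pi (by linarith)
      (by linarith [Real.pi_pos]))
  have hpos {x : ℝ} (h : α ≤ x) (h' : 0 < Real.sin ((x - β) / 2)) : β < x := by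
    by_contra! hx
    exact h'.not_ge (Real.sin_nonpos_of_nonpos_of_neg_pi_le (by linarith) (by linarith [Real.pi_pos]))
  rcases mul_neg_iff.1 h3 with ⟨h4, h5⟩ | ⟨h4, h5⟩
  · obtain ⟨s, t, hst⟩ := paths_in_disc_meet hαδ (hneg hδ' h5) (hpos hγ h4) hγ' (path P hP)
      (path Q hQ).symm (hpath P hP) fun t => hpath Q hQ _
    exact ⟨s, _, inj hst⟩
  · obtain ⟨s, t, hst⟩ := paths_in_disc_meet hαγ (hneg hγ' h4) (hpos hδ h5) hδ' (path P hP)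
      (path Q hQ) (hpath P hP) (hpath Q hQ)
    exact ⟨s, t, inj hst⟩

theorem sqDist_pos {a b : ℝ × ℝ} (h : a ≠ b) : 0 < sqDist a b := by
  rw [sqDist]
  by_contra! h'
  refine h (Prod.ext ?_ ?_) <;> nlinarith [sq_nonneg (b.1 - a.1), sq_nonneg (b.2 - a.2)]

theorem continuous_sqDist (p : ℝ × ℝ) : Continuous (sqDist p) := by
  unfold sqDist; fun_prop

/-- The affine parametrization of the segment from `a` to `b`. -/
def chord (a b : ℝ × ℝ) (t : ℝ) : ℝ × ℝ := (a.1 + t * (b.1 - a.1), a.2 + t * (b.2 - a.2))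

theorem continuous_chord (a b : ℝ × ℝ) : Continuous (chord a b) := by
  unfold chord; fun_prop

@[simp] theorem chord_zero (a b : ℝ × ℝ) : chord a b 0 = a := by simp [chord]

@[simp] theorem chord_one (a b : ℝ × ℝ) : chord a b 1 = b := by simp [chord]

theorem chord_injective {a b : ℝ × ℝ} (h : a ≠ b) : Function.Injective (chord a b) := by
  intro s t hst
  simp only [chord, Prod.mk.injEq, add_right_inj, mul_eq_mul_right_iff, sub_eq_zero] at hst
  rcases hst with ⟨h1 | h1, h2 | h2⟩
  · exact h1
  · exact h1
  · exact h2
  · exact absurd (Prod.ext h1.symm h2.symm) h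

theorem sqDist_chord (p a b : ℝ × ℝ) (t : ℝ) : sqDist p (chord a b t) =
    (1 - t) * sqDist p a + t * sqDist p b - t * (1 - t) * sqDist a b := by
  simp only [sqDist, chord]; ring

theorem sqDist_chord_lt {p a b : ℝ × ℝ} {R t : ℝ} (ha : sqDist p a = R) (hb : sqDist p b = R)
    (hab : a ≠ b) (ht : t ∈ Set.Ioo (0 : ℝ) 1) : sqDist p (chord a b t) < R := by
  rw [sqDist_chord, ha, hb]
  have := mul_pos (mul_pos ht.1 (sub_pos.2 ht.2)) (sqDist_pos hab)
  linarith

theorem side_chord (u v a b : ℝ × ℝ) (t : ℝ) : side u v (chord a b t) =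
    (1 - t) * side u v a + t * side u v b := by
  simp only [side, chord]; ring

@[simp] theorem side_left (a b : ℝ × ℝ) : side a b a = 0 := by simp [side]

@[simp] theorem side_right (a b : ℝ × ℝ) : side a b b = 0 := by simp [side]; ring

theorem side_swap (a b z : ℝ × ℝ) : side b a z = -side a b z := by simp only [side]; ring

theorem eq_or_eq_of_side_eq_zero {p a b c : ℝ × ℝ} {R : ℝ} (ha : sqDist p a = R)
    (hb : sqDist p b = R) (hc : sqDist p c = R) (hab : a ≠ b) (h : side a b c = 0) :
    c = a ∨ c = b := by
  have hpos := sqDist_pos hab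
  obtain ⟨t, rfl⟩ : ∃ t, c = chord a b t := by
    refine ⟨((c.1 - a.1) * (b.1 - a.1) + (c.2 - a.2) * (b.2 - a.2)) / sqDist a b, ?_⟩
    rw [side] at h
    apply Prod.ext <;> simp only [chord] <;> field_simp <;> rw [sqDist]
    · linear_combination (a.2 - b.2) * h
    · linear_combination (b.1 - a.1) * h
  rw [sqDist_chord, ha, hb] at hc
  have : t * (1 - t) * sqDist a b = 0 := by linarith
  rcases mul_eq_zero.1 this with h | h
  · rcases mul_eq_zero.1 h with h | h
    · left; simp [h]
    · right; rw [← sub_eq_zero.1 h]; simp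
  · exact absurd h hpos.ne'

/-- Intersecting chords of a circle with distinct ends cross. -/
theorem side_mul_side_neg {p a b c d : ℝ × ℝ} {R s t : ℝ} (ha : sqDist p a = R)
    (hb : sqDist p b = R) (hc : sqDist p c = R) (hd : sqDist p d = R) (hab : a ≠ b)
    (hca : c ≠ a) (hcb : c ≠ b) (hda : d ≠ a) (hdb : d ≠ b)
    (ht : t ∈ Set.Icc (0 : ℝ) 1) (h : chord a b s = chord c d t) :
    side a b c * side a b d < 0 := by
  have h1 : side a b c ≠ 0 := fun h => (eq_or_eq_of_side_eq_zero ha hb hc hab h).elim hca hcb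
  have h2 : side a b d ≠ 0 := fun h => (eq_or_eq_of_side_eq_zero ha hb hd hab h).elim hda hdb
  have h3 := congrArg (side a b) h
  simp only [side_chord, side_left, side_right] at h3
  by_contra! h4
  have h5 : 0 < side a b c * side a b d := lt_of_le_of_ne h4 (mul_ne_zero h1 h2).symm
  have h6 : 0 = (1 - t) * (side a b c) ^ 2 + t * (side a b c * side a b d) := by
    linear_combination side a b c * h3
  have h7 : 0 < (side a b c) ^ 2 := by positivity
  rcases ht.1.eq_or_lt with rfl | h8
  · linarith
  · nlinarith [mul_pos h8 h5, mul_nonneg (sub_nonneg.2 ht.2) h7.le]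

/-- An excursion of a continuous function below the level `R` has a first and a last point. -/
theorem exists_first_last {h : ℝ → ℝ} {R τ : ℝ} (hc : ContinuousOn h (Set.Icc 0 1))
    (h0 : R < h 0) (h1 : R < h 1) (hτ : τ ∈ Set.Icc (0 : ℝ) 1) (hR : h τ < R) :
    ∃ s t, 0 < s ∧ s < t ∧ t < 1 ∧ h s = R ∧ h t = R ∧
      ∀ u ∈ Set.Icc (0 : ℝ) 1, u < s ∨ t < u → R < h u := by
  have hK : IsCompact (Set.Icc (0 : ℝ) 1 ∩ h ⁻¹' Set.Iic R) :=
    isCompact_Icc.of_isClosed_subset (hc.preimage_isClosed_of_isClosed isClosed_Icc isClosed_Iic)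
      Set.inter_subset_left
  have hne : (Set.Icc (0 : ℝ) 1 ∩ h ⁻¹' Set.Iic R).Nonempty := ⟨τ, hτ, hR.le⟩
  obtain ⟨s, ⟨hs, hsR⟩, hsm⟩ := hK.exists_isLeast hne
  obtain ⟨t, ⟨ht, htR⟩, htm⟩ := hK.exists_isGreatest hne
  have hsR' : h s = R := by
    obtain ⟨u, hu, huR⟩ := intermediate_value_Icc' hs.1
      (hc.mono (Set.Icc_subset_Icc_right hs.2)) ⟨hsR, h0.le⟩
    rwa [le_antisymm (hsm ⟨⟨hu.1, hu.2.trans hs.2⟩, huR.le⟩) hu.2]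
  have htR' : h t = R := by
    obtain ⟨u, hu, huR⟩ := intermediate_value_Icc ht.2
      (hc.mono (Set.Icc_subset_Icc_left ht.1)) ⟨htR, h1.le⟩
    rwa [le_antisymm hu.1 (htm ⟨⟨ht.1.trans hu.1, hu.2⟩, huR.le⟩)]
  have hsτ : s < τ := lt_of_le_of_ne (hsm ⟨hτ, hR.le⟩) fun e => by rw [e] at hsR'; linarith
  have hτt : τ < t := lt_of_le_of_ne (htm ⟨hτ, hR.le⟩) fun e => by rw [e] at hR; linarith
  refine ⟨s, t, lt_of_le_of_ne hs.1 ?_, hsτ.trans hτt, lt_of_le_of_ne ht.2 ?_, hsR', htR', ?_⟩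
  · rintro rfl; linarith
  · rintro rfl; linarith
  · intro u hu hut
    by_contra! hle
    rcases hut with hut | hut
    · exact hut.not_ge (hsm ⟨hu, hle⟩)
    · exact hut.not_ge (htm ⟨hu, hle⟩)

/-- Two disjoint arcs ending on a circle, and otherwise outside of it, are joined by a chord. -/
theorem exists_arc_through_chord {α β : ℝ → ℝ × ℝ} {p : ℝ × ℝ} {R : ℝ}
    (hα : ContinuousOn α (Set.Icc 0 1)) (hβ : ContinuousOn β (Set.Icc 0 1))
    (iα : Set.InjOn α (Set.Icc 0 1)) (iβ : Set.InjOn β (Set.Icc 0 1))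
    (oα : ∀ t ∈ Set.Icc (0 : ℝ) 1, R ≤ sqDist p (α t))
    (oβ : ∀ t ∈ Set.Icc (0 : ℝ) 1, R ≤ sqDist p (β t))
    (eα : sqDist p (α 1) = R) (eβ : sqDist p (β 1) = R)
    (hdisj : ∀ s ∈ Set.Icc (0 : ℝ) 1, ∀ t ∈ Set.Icc (0 : ℝ) 1, α s ≠ β t) :
    ∃ γ : ℝ → ℝ × ℝ, ContinuousOn γ (Set.Icc 0 1) ∧ Set.InjOn γ (Set.Icc 0 1) ∧
      γ 0 = α 0 ∧ γ 1 = β 0 ∧ ∀ t ∈ Set.Ioo (0 : ℝ) 1,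
        (∃ s ∈ Set.Ioc (0 : ℝ) 1, γ t = α s) ∨ (∃ s ∈ Set.Ioc (0 : ℝ) 1, γ t = β s) ∨
        ∃ s ∈ Set.Ioo (0 : ℝ) 1, γ t = chord (α 1) (β 1) s := by
  let c : ℝ → ℝ := fun x => max 0 (min 1 x)
  have hc : Continuous c := by fun_prop
  have hcm (x) : c x ∈ Set.Icc (0 : ℝ) 1 := ⟨le_max_left _ _, max_le zero_le_one (min_le_left _ _)⟩
  have c0 {x} (hx : x ≤ 0) : c x = 0 := max_eq_left ((min_le_right _ _).trans hx)
  have c1 {x} (hx : 1 ≤ x) : c x = 1 := by simp [c, min_eq_left hx]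
  have cx {x} (hx : x ∈ Set.Icc (0 : ℝ) 1) : c x = x := by
    simp only [c]; rw [min_eq_right hx.2, max_eq_right hx.1]
  have hne : α 1 ≠ β 1 := hdisj 1 (by simp) 1 (by simp)
  let γ : ℝ → ℝ × ℝ := fun t => α (c (3 * t)) + (chord (α 1) (β 1) (c (3 * t - 1)) - α 1) +
    (β (c (3 - 3 * t)) - β 1)
  have g1 {t} (h0 : 0 ≤ t) (h1 : t ≤ 1 / 3) : γ t = α (3 * t) := by
    simp only [γ]
    rw [cx ⟨by linarith, by linarith⟩, c0 (by linarith), c1 (by linarith)]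
    simp
  have g2 {t} (h0 : 1 / 3 < t) (h1 : t < 2 / 3) : γ t = chord (α 1) (β 1) (3 * t - 1) := by
    simp only [γ]
    rw [c1 (by linarith), cx ⟨by linarith, by linarith⟩, c1 (by linarith)]
    simp
  have g3 {t} (h0 : 2 / 3 ≤ t) (h1 : t ≤ 1) : γ t = β (3 - 3 * t) := by
    simp only [γ]
    rw [c1 (by linarith), c1 (by linarith), cx ⟨by linarith, by linarith⟩]
    simp
  have hlt {t} (h0 : 1 / 3 < t) (h1 : t < 2 / 3) :
      sqDist p (chord (α 1) (β 1) (3 * t - 1)) < R :=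
    sqDist_chord_lt eα eβ hne ⟨by linarith, by linarith⟩
  refine ⟨γ, ?_, ?_, ?_, ?_, ?_⟩
  · refine Continuous.continuousOn ?_
    have hA : Continuous fun t => α (c (3 * t)) :=
      hα.comp_continuous (by fun_prop) fun t => hcm _
    have hB : Continuous fun t => β (c (3 - 3 * t)) :=
      hβ.comp_continuous (by fun_prop) fun t => hcm _
    have hC := (continuous_chord (α 1) (β 1)).comp
      (hc.comp (by fun_prop : Continuous fun t : ℝ => 3 * t - 1))
    exact (hA.add (hC.sub continuous_const)).add (hB.sub continuous_const)
  · intro s hs t ht hst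
    rcases le_or_gt s (1 / 3) with s1 | s1
    · rw [g1 hs.1 s1] at hst
      have hs' : 3 * s ∈ Set.Icc (0 : ℝ) 1 := ⟨by linarith [hs.1], by linarith⟩
      rcases le_or_gt t (1 / 3) with t1 | t1
      · rw [g1 ht.1 t1] at hst
        linarith [iα hs' ⟨by linarith [ht.1], by linarith⟩ hst]
      · rcases lt_or_ge t (2 / 3) with t2 | t2
        · rw [g2 t1 t2] at hst
          have := hlt t1 t2
          rw [← hst] at this
          exact absurd (oα _ hs') this.not_ge
        · rw [g3 t2 ht.2] at hst
          exact absurd hst (hdisj _ hs' _ ⟨by linarith [ht.2], by linarith⟩)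
    · rcases lt_or_ge s (2 / 3) with s2 | s2
      · rw [g2 s1 s2] at hst
        have hl := hlt s1 s2
        rcases le_or_gt t (1 / 3) with t1 | t1
        · rw [hst, g1 ht.1 t1] at hl
          exact absurd (oα _ ⟨by linarith [ht.1], by linarith⟩) hl.not_ge
        · rcases lt_or_ge t (2 / 3) with t2 | t2
          · rw [g2 t1 t2] at hst
            linarith [chord_injective hne hst]
          · rw [hst, g3 t2 ht.2] at hl
            exact absurd (oβ _ ⟨by linarith [ht.2], by linarith⟩) hl.not_ge
      · rw [g3 s2 hs.2] at hst
        have hs' : 3 - 3 * s ∈ Set.Icc (0 : ℝ) 1 := ⟨by linarith [hs.2], by linarith⟩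
        rcases le_or_gt t (1 / 3) with t1 | t1
        · rw [g1 ht.1 t1] at hst
          exact absurd hst.symm (hdisj _ ⟨by linarith [ht.1], by linarith⟩ _ hs')
        · rcases lt_or_ge t (2 / 3) with t2 | t2
          · rw [g2 t1 t2] at hst
            have := hlt t1 t2
            rw [← hst] at this
            exact absurd (oβ _ hs') this.not_ge
          · rw [g3 t2 ht.2] at hst
            linarith [iβ hs' ⟨by linarith [ht.2], by linarith⟩ hst]
  · rw [g1 le_rfl (by norm_num), mul_zero]
  · rw [g3 (by norm_num) le_rfl]; norm_num
  · intro t ht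
    rcases le_or_gt t (1 / 3) with t1 | t1
    · exact Or.inl ⟨_, ⟨by linarith [ht.1], by linarith⟩, g1 ht.1.le t1⟩
    · rcases lt_or_ge t (2 / 3) with t2 | t2
      · exact Or.inr (Or.inr ⟨_, ⟨by linarith, by linarith⟩, g2 t1 t2⟩)
      · exact Or.inr (Or.inl ⟨_, ⟨by linarith [ht.2], by linarith⟩, g3 t2 ht.2.le⟩)

end Plane

section Crossing

/-- `en` lists the ends of two edges of `G`, where `en i` and `en (i + 2)` are the ends of the
same edge. -/
structure IsEdgePair {V : Type*} (G : SimpleGraph V) (en : Fin 4 → V) : Prop where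
  adj : ∀ i, G.Adj (en i) (en (i + 2))
  ne : s(en 0, en 2) ≠ s(en 1, en 3)

theorem IsEdgePair.edge_ne {V : Type*} {G : SimpleGraph V} {en : Fin 4 → V} (h : IsEdgePair G en)
    {i j : Fin 4} (h1 : j ≠ i) (h2 : j ≠ i + 2) :
    s(en i, en (i + 2)) ≠ s(en j, en (j + 2)) := by
  have h0 := h.ne
  have h0' := h.ne.symm
  fin_cases i <;> fin_cases j <;> first | exact absurd rfl h1 | exact absurd rfl h2 | skip
  all_goals simp only [Fin.reduceFinMk, Fin.isValue, Fin.reduceAdd, Fin.zero_eta, Fin.mk_one]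
  all_goals try rw [Sym2.eq_swap (a := en 2)]
  all_goals try rw [Sym2.eq_swap (a := en 3)]
  all_goals assumption

theorem edge_add_two {V : Type*} (en : Fin 4 → V) (i : Fin 4) :
    s(en (i + 2), en (i + 2 + 2)) = s(en i, en (i + 2)) := by
  rw [add_assoc, show (2 : Fin 4) + 2 = 0 from rfl, add_zero, Sym2.eq_swap]

/-- `P` is an initial piece of the arc `γ` which starts at `x` and stops when it first meets the
circle of radius `r` around `p`. -/
structure IsPendant (γ : ℝ → ℝ × ℝ) (p : ℝ × ℝ) (r : ℝ) (x : ℝ × ℝ) (P : ℝ → ℝ × ℝ) : Prop where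
  cont : ContinuousOn P (Set.Icc 0 1)
  injOn : Set.InjOn P (Set.Icc 0 1)
  start : P 0 = x
  finish : sqDist p (P 1) = r ^ 2
  outside : ∀ t ∈ Set.Ico (0 : ℝ) 1, r ^ 2 < sqDist p (P t)
  mem : ∀ t ∈ Set.Ioc (0 : ℝ) 1, P t ∈ γ '' Set.Ioo 0 1

theorem IsPendant.le_sqDist {γ P : ℝ → ℝ × ℝ} {p x : ℝ × ℝ} {r : ℝ} (h : IsPendant γ p r x P)
    {t : ℝ} (ht : t ∈ Set.Icc (0 : ℝ) 1) : r ^ 2 ≤ sqDist p (P t) := by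
  rcases ht.2.lt_or_eq with h1 | rfl
  · exact (h.outside t ⟨ht.1, h1⟩).le
  · exact h.finish.ge

theorem exists_isPendant {γ : ℝ → ℝ × ℝ} {p : ℝ × ℝ} {r τ : ℝ} (hr : 0 < r)
    (hc : ContinuousOn γ (Set.Icc 0 1)) (hi : Set.InjOn γ (Set.Icc 0 1))
    (h0 : r ^ 2 < sqDist p (γ 0)) (h1 : r ^ 2 < sqDist p (γ 1))
    (hτ : τ ∈ Set.Icc (0 : ℝ) 1) (hp : γ τ = p) :
    ∃ P Q, IsPendant γ p r (γ 0) P ∧ IsPendant γ p r (γ 1) Q ∧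
      ∀ s ∈ Set.Ioc (0 : ℝ) 1, ∀ t ∈ Set.Ioc (0 : ℝ) 1, P s ≠ Q t := by
  obtain ⟨s, t, hs, hst, ht, es, et, hout⟩ := exists_first_last
    ((continuous_sqDist p).comp_continuousOn hc) h0 h1 hτ
    (by simpa [hp, sqDist] using pow_pos hr 2)
  have mP {u : ℝ} (hu : u ∈ Set.Icc (0 : ℝ) 1) : u * s ∈ Set.Icc (0 : ℝ) s :=
    ⟨mul_nonneg hu.1 hs.le, by nlinarith [hu.2]⟩
  have mQ {u : ℝ} (hu : u ∈ Set.Icc (0 : ℝ) 1) : 1 - u * (1 - t) ∈ Set.Icc t 1 :=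
    ⟨by nlinarith [hu.2], by nlinarith [hu.1]⟩
  have iP {u : ℝ} (hu : u ∈ Set.Icc (0 : ℝ) 1) : u * s ∈ Set.Icc (0 : ℝ) 1 :=
    ⟨(mP hu).1, by linarith [(mP hu).2]⟩
  have iQ {u : ℝ} (hu : u ∈ Set.Icc (0 : ℝ) 1) : 1 - u * (1 - t) ∈ Set.Icc (0 : ℝ) 1 :=
    ⟨by linarith [(mQ hu).1], (mQ hu).2⟩
  refine ⟨fun u => γ (u * s), fun u => γ (1 - u * (1 - t)), ⟨?_, ?_, ?_, ?_, ?_, ?_⟩,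
    ⟨?_, ?_, ?_, ?_, ?_, ?_⟩, ?_⟩
  · exact hc.comp (by fun_prop) fun u hu => iP hu
  · intro u hu v hv huv
    exact mul_right_cancel₀ hs.ne' (hi (iP hu) (iP hv) huv)
  · simp
  · simpa using es
  · intro u hu
    exact hout _ (iP ⟨hu.1, hu.2.le⟩) (Or.inl (by nlinarith [hu.2]))
  · intro u hu
    exact ⟨_, ⟨mul_pos hu.1 hs, by nlinarith [hu.2]⟩, rfl⟩
  · exact hc.comp (by fun_prop) fun u hu => iQ hu
  · intro u hu v hv huv
    have := hi (iQ hu) (iQ hv) huv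
    exact mul_right_cancel₀ (sub_pos.2 ht).ne' (by linarith)
  · simp
  · simpa using et
  · intro u hu
    exact hout _ (iQ ⟨hu.1, hu.2.le⟩) (Or.inr (by nlinarith [hu.2]))
  · intro u hu
    exact ⟨_, ⟨by nlinarith [hu.2], by nlinarith [hu.1]⟩, rfl⟩
  · intro u hu v hv huv
    have := hi (iP ⟨hu.1.le, hu.2⟩) (iQ ⟨hv.1.le, hv.2⟩) huv
    linarith [(mP ⟨hu.1.le, hu.2⟩).2, (mQ ⟨hv.1.le, hv.2⟩).1]

/-- A drawing whose only crossing lies at the centre `p` of a disc of radius `r`, and the four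
pieces `pend i` of the crossing edges which lead from their ends `en i` to this disc. -/
structure CrossingModel {V : Type*} {G : SimpleGraph V} (d : Drawing G) (en : Fin 4 → V)
    (p : ℝ × ℝ) (r : ℝ) (pend : Fin 4 → ℝ → ℝ × ℝ) : Prop extends IsEdgePair G en where
  radius_pos : 0 < r
  pendant : ∀ i, IsPendant (d.arc ⟨s(en i, en (i + 2)), adj i⟩) p r (d.vpos (en i)) (pend i)
  disj : ∀ i j, i ≠ j → ∀ s ∈ Set.Ioc (0 : ℝ) 1, ∀ t ∈ Set.Ioc (0 : ℝ) 1, pend i s ≠ pend j t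
  vert_outside : ∀ v, r ^ 2 < sqDist p (d.vpos v)
  edge_outside : ∀ g : G.edgeSet, (∀ i, g.1 ≠ s(en i, en (i + 2))) →
    ∀ t ∈ Set.Icc (0 : ℝ) 1, r ^ 2 < sqDist p (d.arc g t)
  edge_disj : ∀ g : G.edgeSet, (∀ i, g.1 ≠ s(en i, en (i + 2))) → ∀ h : G.edgeSet, g ≠ h →
    ∀ s ∈ Set.Ioo (0 : ℝ) 1, ∀ t ∈ Set.Ioo (0 : ℝ) 1, d.arc g s ≠ d.arc h t

theorem exists_disc_avoiding {K : Set (ℝ × ℝ)} (hK : IsClosed K) {p : ℝ × ℝ} (hp : p ∉ K) :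
    ∃ r > 0, ∀ z ∈ K, r ^ 2 < sqDist p z := by
  obtain ⟨ε, hε, hb⟩ := Metric.isOpen_iff.1 hK.isOpen_compl p hp
  refine ⟨ε / 2, half_pos hε, fun z hz => ?_⟩
  by_contra! h
  refine hb (a := z) ?_ hz
  rw [sqDist] at h
  have h1 := abs_le_of_sq_le_sq' (show (z.1 - p.1) ^ 2 ≤ (ε / 2) ^ 2 by
    nlinarith [sq_nonneg (z.2 - p.2)])
    (half_pos hε).le
  have h2 := abs_le_of_sq_le_sq' (show (z.2 - p.2) ^ 2 ≤ (ε / 2) ^ 2 by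
    nlinarith [sq_nonneg (z.1 - p.1)])
    (half_pos hε).le
  rw [Metric.mem_ball, Prod.dist_eq, max_lt_iff, Real.dist_eq, Real.dist_eq, abs_lt, abs_lt]
  refine ⟨⟨?_, ?_⟩, ?_, ?_⟩ <;> linarith [h1.1, h1.2, h2.1, h2.2]

theorem Drawing.OneCrossing.exists_crossingModel {V : Type*} [Finite V] {G : SimpleGraph V}
    {d : Drawing G} (hd : d.OneCrossing) :
    ∃ en p r pend, CrossingModel d en p r pend := by
  obtain ⟨e, f, hef, ⟨p, ⟨⟨τ, hτ, hpe⟩, ⟨σ, hσ, hpf⟩⟩, huniq⟩, hother⟩ := hd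
  have hdisj (g : G.edgeSet) (hge : g ≠ e) (hgf : g ≠ f) (h : G.edgeSet) (hgh : g ≠ h)
      (s) (hs : s ∈ Set.Ioo (0 : ℝ) 1) (t) (ht : t ∈ Set.Ioo (0 : ℝ) 1) :
      d.arc g s ≠ d.arc h t := by
    intro hst
    have := hother g h hgh fun hE => by
      have : g ∈ ({e, f} : Set G.edgeSet) := hE ▸ Set.mem_insert _ _
      exact this.elim hge hgf
    exact (Set.eq_empty_iff_forall_notMem.1 this) _ ⟨⟨s, hs, rfl⟩, ⟨t, ht, hst.symm⟩⟩
  let K : Set (ℝ × ℝ) := Set.range d.vpos ∪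
    ⋃ g : {g : G.edgeSet // g ≠ e ∧ g ≠ f}, d.arc g.1 '' Set.Icc 0 1
  have hK : IsClosed K := (Set.finite_range _).isClosed.union
    (isClosed_iUnion_of_finite fun g => (isCompact_Icc.image_of_continuousOn (d.cont _)).isClosed)
  have hpK : p ∉ K := by
    rintro (⟨v, hv⟩ | hp)
    · exact d.interiorAvoidsVertices e v τ hτ (hpe.trans hv.symm)
    · obtain ⟨⟨g, hge, hgf⟩, t, ht, htp⟩ := Set.mem_iUnion.1 hp
      obtain ⟨u, v, -, h0, h1⟩ := d.ends g
      rcases ht.1.eq_or_lt with rfl | h2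
      · exact d.interiorAvoidsVertices e u τ hτ (hpe.trans (htp.symm.trans h0))
      rcases ht.2.eq_or_lt with rfl | h3
      · exact d.interiorAvoidsVertices e v τ hτ (hpe.trans (htp.symm.trans h1))
      exact hdisj g hge hgf e hge t ⟨h2, h3⟩ τ hτ (htp.trans hpe.symm)
  obtain ⟨r, hr, hrK⟩ := exists_disc_avoiding hK hpK
  have hv (v : V) : r ^ 2 < sqDist p (d.vpos v) := hrK _ (Or.inl ⟨v, rfl⟩)
  obtain ⟨a, b, hab, ea, eb⟩ := d.ends e
  obtain ⟨x, y, hxy, ex, ey⟩ := d.ends f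
  obtain ⟨P, Q, hP, hQ, hPQ⟩ := exists_isPendant hr (d.cont e) (d.injOn e) (ea ▸ hv a)
    (eb ▸ hv b) ⟨hτ.1.le, hτ.2.le⟩ hpe
  obtain ⟨P', Q', hP', hQ', hPQ'⟩ := exists_isPendant hr (d.cont f) (d.injOn f) (ex ▸ hv x)
    (ey ▸ hv y) ⟨hσ.1.le, hσ.2.le⟩ hpf
  rw [ea] at hP
  rw [eb] at hQ
  rw [ex] at hP'
  rw [ey] at hQ'
  have he : ∀ h, (⟨s(a, b), h⟩ : G.edgeSet) = e := fun h => Subtype.ext hab.symm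
  have he' : ∀ h, (⟨s(b, a), h⟩ : G.edgeSet) = e := fun h =>
    Subtype.ext (Sym2.eq_swap.trans hab.symm)
  have hf : ∀ h, (⟨s(x, y), h⟩ : G.edgeSet) = f := fun h => Subtype.ext hxy.symm
  have hf' : ∀ h, (⟨s(y, x), h⟩ : G.edgeSet) = f := fun h =>
    Subtype.ext (Sym2.eq_swap.trans hxy.symm)
  have hGe : G.Adj a b := by have := e.2; rwa [hab] at this
  have hGf : G.Adj x y := by have := f.2; rwa [hxy] at this
  have cross {u v A B} (hA : IsPendant (d.arc e) p r u A) (hB : IsPendant (d.arc f) p r v B)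
      (s) (hs : s ∈ Set.Ioc (0 : ℝ) 1) (t) (ht : t ∈ Set.Ioc (0 : ℝ) 1) : A s ≠ B t := by
    intro hst
    have h1 : A s = p := huniq _ ⟨hA.mem s hs, hst ▸ hB.mem t ht⟩
    have h2 := hA.le_sqDist ⟨hs.1.le, hs.2⟩
    rw [h1] at h2
    simp only [sqDist, sub_self] at h2
    nlinarith
  have transfer {g h : G.edgeSet} (hgh : g = h) {u A} (hA : IsPendant (d.arc h) p r u A) :
      IsPendant (d.arc g) p r u A := hgh ▸ hA
  have hmem (g : G.edgeSet)
      (hg : ∀ i, g.1 ≠ s((![a, x, b, y] : Fin 4 → V) i, (![a, x, b, y] : Fin 4 → V) (i + 2))) :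
      g ≠ e ∧ g ≠ f :=
    ⟨fun h => hg 0 ((congrArg Subtype.val h).trans hab),
      fun h => hg 1 ((congrArg Subtype.val h).trans hxy)⟩
  refine ⟨![a, x, b, y], p, r, ![P, P', Q, Q'], ⟨?_, ?_⟩, hr, ?_, ?_, hv, ?_, ?_⟩
  · intro i
    fin_cases i
    exacts [hGe, hGf, hGe.symm, hGf.symm]
  · intro h
    exact hef (Subtype.ext (hab.trans (h.trans hxy.symm)))
  · intro i
    fin_cases i
    · exact transfer (he _) hP
    · exact transfer (hf _) hP'
    · exact transfer (he' _) hQ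
    · exact transfer (hf' _) hQ'
  · have wlog_lt : ∀ i j : Fin 4, i < j → ∀ s ∈ Set.Ioc (0 : ℝ) 1, ∀ t ∈ Set.Ioc (0 : ℝ) 1,
        (![P, P', Q, Q'] : Fin 4 → ℝ → ℝ × ℝ) i s ≠ (![P, P', Q, Q'] : Fin 4 → ℝ → ℝ × ℝ) j t := by
      intro i j hij
      fin_cases i <;> fin_cases j <;> first | exact absurd hij (by decide) | skip
      · exact cross hP hP'
      · exact hPQ
      · exact cross hP hQ'
      · exact fun s hs t ht => (cross hQ hP' t ht s hs).symm
      · exact hPQ'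
      · exact cross hQ hQ'
    intro i j hij s hs t ht
    rcases hij.lt_or_gt with h | h
    · exact wlog_lt i j h s hs t ht
    · exact (wlog_lt j i h t ht s hs).symm
  · intro g hg t ht
    exact hrK _ (Or.inr (Set.mem_iUnion.2 ⟨⟨g, hmem g hg⟩, t, ht, rfl⟩))
  · intro g hg
    exact hdisj g (hmem g hg).1 (hmem g hg).2

end Crossing

section PlanarCase

variable {V : Type*} {G : SimpleGraph V} {d : Drawing G} {en : Fin 4 → V} {p : ℝ × ℝ} {r : ℝ}
  {pend : Fin 4 → ℝ → ℝ × ℝ}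

theorem CrossingModel.pend_ne_vpos (h : CrossingModel d en p r pend) (i : Fin 4) {t : ℝ}
    (ht : t ∈ Set.Ioc (0 : ℝ) 1) (v : V) : pend i t ≠ d.vpos v := by
  obtain ⟨s, hs, hst⟩ := (h.pendant i).mem t ht
  rw [← hst]
  exact d.interiorAvoidsVertices _ v s hs

theorem CrossingModel.pend_ne_arc (h : CrossingModel d en p r pend) (i : Fin 4) {s t : ℝ}
    (hs : s ∈ Set.Ioc (0 : ℝ) 1) {g : G.edgeSet} (hg : ∀ i, g.1 ≠ s(en i, en (i + 2)))
    (ht : t ∈ Set.Ioo (0 : ℝ) 1) : pend i s ≠ d.arc g t := by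
  obtain ⟨u, hu, hus⟩ := (h.pendant i).mem s hs
  rw [← hus]
  exact (h.edge_disj g hg _ (fun e => hg i (congrArg Subtype.val e)) t ht u hu).symm

theorem CrossingModel.pend_ne_pend (h : CrossingModel d en p r pend) {i j : Fin 4}
    (hij : en i ≠ en j) {s t : ℝ} (hs : s ∈ Set.Icc (0 : ℝ) 1) (ht : t ∈ Set.Icc (0 : ℝ) 1) :
    pend i s ≠ pend j t := by
  rcases hs.1.eq_or_lt with rfl | hs0 <;> rcases ht.1.eq_or_lt with rfl | ht0
  · rw [(h.pendant i).start, (h.pendant j).start]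
    exact fun e => hij (d.vinj e)
  · rw [(h.pendant i).start]
    exact (h.pend_ne_vpos j ⟨ht0, ht.2⟩ _).symm
  · rw [(h.pendant j).start]
    exact h.pend_ne_vpos i ⟨hs0, hs.2⟩ _
  · exact h.disj i j (fun e => hij (congrArg en e)) s ⟨hs0, hs.2⟩ t ⟨ht0, ht.2⟩

theorem CrossingModel.pend_one_ne (h : CrossingModel d en p r pend) {i j : Fin 4}
    (hij : i ≠ j) : pend i 1 ≠ pend j 1 :=
  h.disj i j hij 1 (by simp) 1 (by simp)

theorem CrossingModel.sqDist_chord_lt (h : CrossingModel d en p r pend) {i j : Fin 4}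
    (hij : i ≠ j) {t : ℝ} (ht : t ∈ Set.Ioo (0 : ℝ) 1) :
    sqDist p (chord (pend i 1) (pend j 1) t) < r ^ 2 :=
  _root_.sqDist_chord_lt (h.pendant i).finish (h.pendant j).finish (h.pend_one_ne hij) ht

/-- If the chords which replace the crossing edges inside the disc are disjoint, then rerouting
the crossing edges along them removes the crossing. -/
theorem CrossingModel.isPlanarGraph (h : CrossingModel d en p r pend)
    (hch : ∀ i j, j ≠ i → j ≠ i + 2 → ∀ s ∈ Set.Ioo (0 : ℝ) 1, ∀ t ∈ Set.Ioo (0 : ℝ) 1,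
      chord (pend i 1) (pend (i + 2) 1) s ≠ chord (pend j 1) (pend (j + 2) 1) t) :
    IsPlanarGraph G := by
  have hi2 (i : Fin 4) : i ≠ i + 2 := by decide +revert
  have hadd (i j : Fin 4) (hij : j ≠ i + 2) : j + 2 ≠ i := by decide +revert
  have key (g : G.edgeSet) : ∃ γ : ℝ → ℝ × ℝ, ContinuousOn γ (Set.Icc 0 1) ∧
      Set.InjOn γ (Set.Icc 0 1) ∧
      (∃ u v, g.1 = s(u, v) ∧ γ 0 = d.vpos u ∧ γ 1 = d.vpos v) ∧
      ((∀ i, g.1 ≠ s(en i, en (i + 2))) ∧ γ = d.arc g ∨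
        ∃ i, g.1 = s(en i, en (i + 2)) ∧ ∀ t ∈ Set.Ioo (0 : ℝ) 1,
          (∃ s ∈ Set.Ioc (0 : ℝ) 1, γ t = pend i s) ∨
          (∃ s ∈ Set.Ioc (0 : ℝ) 1, γ t = pend (i + 2) s) ∨
          ∃ s ∈ Set.Ioo (0 : ℝ) 1, γ t = chord (pend i 1) (pend (i + 2) 1) s) := by
    by_cases hg : ∀ i, g.1 ≠ s(en i, en (i + 2))
    · exact ⟨d.arc g, d.cont g, d.injOn g, d.ends g, Or.inl ⟨hg, rfl⟩⟩
    · push Not at hg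
      obtain ⟨i, hi⟩ := hg
      obtain ⟨γ, hc, hinj, h0, h1, htri⟩ := exists_arc_through_chord (h.pendant i).cont
        (h.pendant (i + 2)).cont (h.pendant i).injOn (h.pendant (i + 2)).injOn
        (fun t ht => (h.pendant i).le_sqDist ht) (fun t ht => (h.pendant (i + 2)).le_sqDist ht)
        (h.pendant i).finish (h.pendant (i + 2)).finish
        (fun s hs t ht => h.pend_ne_pend (h.adj i).ne hs ht)
      exact ⟨γ, hc, hinj, ⟨en i, en (i + 2), hi, h0.trans (h.pendant i).start,
        h1.trans (h.pendant (i + 2)).start⟩, Or.inr ⟨i, hi, htri⟩⟩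
  choose γ hc hinj hends hγ using key
  have hedge (g k : G.edgeSet) (hg : ∀ i, g.1 ≠ s(en i, en (i + 2))) (hgk : g ≠ k)
      (s) (hs : s ∈ Set.Ioo (0 : ℝ) 1) (t) (ht : t ∈ Set.Ioo (0 : ℝ) 1) :
      d.arc g s ≠ γ k t := by
    intro hst
    have hout := h.edge_outside g hg s ⟨hs.1.le, hs.2.le⟩
    rcases hγ k with ⟨-, hk⟩ | ⟨i, -, hk⟩
    · rw [hk] at hst
      exact h.edge_disj g hg k hgk s hs t ht hst
    · rcases hk t ht with ⟨u, hu, e⟩ | ⟨u, hu, e⟩ | ⟨u, hu, e⟩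
      · exact h.pend_ne_arc _ hu hg hs (e.symm.trans hst.symm)
      · exact h.pend_ne_arc _ hu hg hs (e.symm.trans hst.symm)
      · have := h.sqDist_chord_lt (hi2 i) hu
        rw [← e, ← hst] at this
        exact this.not_gt hout
  refine ⟨⟨d.vpos, d.vinj, γ, hc, hinj, hends, ?_⟩, ?_⟩
  · intro g w t ht
    rcases hγ g with ⟨-, hk⟩ | ⟨i, -, hk⟩
    · rw [hk]
      exact d.interiorAvoidsVertices g w t ht
    · rcases hk t ht with ⟨u, hu, e⟩ | ⟨u, hu, e⟩ | ⟨u, hu, e⟩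
      · exact e ▸ h.pend_ne_vpos _ hu w
      · exact e ▸ h.pend_ne_vpos _ hu w
      · intro hw
        have := h.sqDist_chord_lt (hi2 i) hu
        rw [← e, hw] at this
        exact this.not_gt (h.vert_outside w)
  · intro g k hgk
    rw [Set.eq_empty_iff_forall_notMem]
    rintro - ⟨⟨s, hs, rfl⟩, ⟨t, ht, hst⟩⟩
    change γ k t = γ g s at hst
    rcases hγ g with ⟨hg, hg'⟩ | ⟨i, hi, hg⟩
    · rw [hg'] at hst
      exact hedge g k hg hgk s hs t ht hst.symm
    rcases hγ k with ⟨hk, hk'⟩ | ⟨j, hj, hk⟩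
    · rw [hk'] at hst
      exact hedge k g hk hgk.symm t ht s hs hst
    have hji : j ≠ i := by
      rintro rfl
      exact hgk (Subtype.ext (hi.trans hj.symm))
    have hji2 : j ≠ i + 2 := by
      rintro rfl
      exact hgk (Subtype.ext (hi.trans (hj.trans (edge_add_two en i)).symm))
    have pc {a b c : Fin 4} (hbc : b ≠ c) {u v : ℝ} (hu : u ∈ Set.Ioc (0 : ℝ) 1)
        (hv : v ∈ Set.Ioo (0 : ℝ) 1) : pend a u ≠ chord (pend b 1) (pend c 1) v := by
      intro e
      have := h.sqDist_chord_lt hbc hv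
      rw [← e] at this
      exact this.not_ge ((h.pendant a).le_sqDist ⟨hu.1.le, hu.2⟩)
    rcases hg s hs with ⟨u, hu, e⟩ | ⟨u, hu, e⟩ | ⟨u, hu, e⟩ <;>
      rcases hk t ht with ⟨v, hv, e'⟩ | ⟨v, hv, e'⟩ | ⟨v, hv, e'⟩ <;> rw [e, e'] at hst
    · exact h.disj _ _ hji _ hv _ hu hst
    · exact h.disj _ _ (hadd i j hji2) _ hv _ hu hst
    · exact pc (hi2 j) hu hv hst.symm
    · exact h.disj _ _ hji2 _ hv _ hu hst
    · exact h.disj _ _ (fun e => hji (add_right_cancel e)) _ hv _ hu hst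
    · exact pc (hi2 j) hu hv hst.symm
    · exact pc (hi2 i) hv hu hst
    · exact pc (hi2 i) hv hu hst
    · exact hch i j hji hji2 u hu v hv hst.symm

/-- Either the graph is planar, or the four points on the circle are in crossing position. -/
theorem CrossingModel.isPlanarGraph_or_side_mul_side_neg (h : CrossingModel d en p r pend) :
    IsPlanarGraph G ∨ ∀ i, side (pend i 1) (pend (i + 2) 1) (pend (i + 1) 1) *
      side (pend i 1) (pend (i + 2) 1) (pend (i + 3) 1) < 0 := by
  by_cases hch : ∀ i j, j ≠ i → j ≠ i + 2 → ∀ s ∈ Set.Ioo (0 : ℝ) 1, ∀ t ∈ Set.Ioo (0 : ℝ) 1,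
      chord (pend i 1) (pend (i + 2) 1) s ≠ chord (pend j 1) (pend (j + 2) 1) t
  · exact Or.inl (h.isPlanarGraph hch)
  right
  push Not at hch
  obtain ⟨i, j, hji, hji2, s, hs, t, ht, hst⟩ := hch
  have hi2 (i : Fin 4) : i ≠ i + 2 := by decide +revert
  have hne (i j : Fin 4) (h1 : j ≠ i) (h2 : j ≠ i + 2) : j + 2 ≠ i ∧ j + 2 ≠ i + 2 := by
    decide +revert
  have half (i j : Fin 4) (hji : j ≠ i) (hji2 : j ≠ i + 2) (s) (t) (ht : t ∈ Set.Ioo (0 : ℝ) 1)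
      (hst : chord (pend i 1) (pend (i + 2) 1) s = chord (pend j 1) (pend (j + 2) 1) t) :
      side (pend i 1) (pend (i + 2) 1) (pend j 1) *
        side (pend i 1) (pend (i + 2) 1) (pend (j + 2) 1) < 0 :=
    side_mul_side_neg (h.pendant _).finish (h.pendant _).finish (h.pendant _).finish
      (h.pendant _).finish (h.pend_one_ne (hi2 i)) (h.pend_one_ne hji) (h.pend_one_ne hji2)
      (h.pend_one_ne (hne i j hji hji2).1) (h.pend_one_ne (hne i j hji hji2).2)
      ⟨ht.1.le, ht.2.le⟩ hst
  have h1 := half i j hji hji2 s t ht hst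
  have h2 := half j i hji.symm (hne i j hji hji2).1.symm t s hs hst.symm
  have opp (k : Fin 4) (hk : side (pend k 1) (pend (k + 2) 1) (pend (k + 1) 1) *
      side (pend k 1) (pend (k + 2) 1) (pend (k + 3) 1) < 0) :
      side (pend (k + 2) 1) (pend (k + 2 + 2) 1) (pend (k + 2 + 1) 1) *
      side (pend (k + 2) 1) (pend (k + 2 + 2) 1) (pend (k + 2 + 3) 1) < 0 := by
    have e1 : k + 2 + 2 = k := by clear * -; decide +revert
    have e2 : k + 2 + 1 = k + 3 := by clear * -; decide +revert
    have e3 : k + 2 + 3 = k + 1 := by clear * -; decide +revert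
    rw [e1, e2, e3, side_swap (pend k 1), side_swap (pend k 1)]
    linarith
  have hshift (k l : Fin 4) (hlk : l ≠ k) (hlk2 : l ≠ k + 2)
      (hk : side (pend k 1) (pend (k + 2) 1) (pend l 1) *
        side (pend k 1) (pend (k + 2) 1) (pend (l + 2) 1) < 0) :
      side (pend k 1) (pend (k + 2) 1) (pend (k + 1) 1) *
        side (pend k 1) (pend (k + 2) 1) (pend (k + 3) 1) < 0 := by
    have : l = k + 1 ∧ l + 2 = k + 3 ∨ l = k + 3 ∧ l + 2 = k + 1 := by
      clear * - hlk hlk2; decide +revert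
    rcases this with ⟨e1, e2⟩ | ⟨e1, e2⟩ <;> rw [e2, e1] at hk
    · exact hk
    · linarith
  have h3 := hshift i j hji hji2 h1
  have h4 := hshift j i hji.symm (hne i j hji hji2).1.symm h2
  intro k
  have : k = i ∨ k = i + 2 ∨ k = j ∨ k = j + 2 := by
    clear * - hji hji2; decide +revert
  rcases this with rfl | rfl | rfl | rfl
  exacts [h3, opp i h3, h4, opp j h4]

end PlanarCase

section Uncross

/-- The graph obtained by deleting the two edges `en 0, en 2` and `en 1, en 3`, and joining their
ends to the vertices of a new 4-circuit. -/
def uncross {V : Type*} (G : SimpleGraph V) (en : Fin 4 → V) : SimpleGraph (V ⊕ Fin 4) where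
  Adj
    | .inl u, .inl v => G.Adj u v ∧ ∀ i, s(u, v) ≠ s(en i, en (i + 2))
    | .inl u, .inr i => u = en i
    | .inr i, .inl u => u = en i
    | .inr i, .inr j => j = i + 1 ∨ i = j + 1
  symm := ⟨by
    rintro (u | i) (v | j) h
    · exact ⟨h.1.symm, fun i => Sym2.eq_swap (a := u) ▸ h.2 i⟩
    · exact h
    · exact h
    · exact h.symm⟩
  loopless := ⟨by
    rintro (u | i) h
    · exact h.1.ne rfl
    · change i = i + 1 ∨ i = i + 1 at h
      revert h
      decide +revert⟩

variable {V : Type*} {G : SimpleGraph V} {d : Drawing G} {en : Fin 4 → V} {p : ℝ × ℝ} {r : ℝ}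
  {pend : Fin 4 → ℝ → ℝ × ℝ}

@[simp] theorem uncross_adj_inl_inr {u : V} {i : Fin 4} :
    (uncross G en).Adj (.inl u) (.inr i) ↔ u = en i := Iff.rfl

@[simp] theorem uncross_adj_inr_inl {u : V} {i : Fin 4} :
    (uncross G en).Adj (.inr i) (.inl u) ↔ u = en i := Iff.rfl

@[simp] theorem uncross_adj_inr_inr {i j : Fin 4} :
    (uncross G en).Adj (.inr i) (.inr j) ↔ j = i + 1 ∨ i = j + 1 := Iff.rfl

/-- An edge of `uncross G en` is an edge of `G`, or a pendant edge, or an edge of the circuit. -/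
theorem uncross_edge_cases (g : (uncross G en).edgeSet) :
    (∃ u v, G.Adj u v ∧ g.1 = s(.inl u, .inl v) ∧ ∀ i, s(u, v) ≠ s(en i, en (i + 2))) ∨
    (∃ i, g.1 = s(.inl (en i), .inr i)) ∨ ∃ i, g.1 = s(.inr i, .inr (i + 1)) := by
  obtain ⟨g, hg⟩ := g
  induction g with
  | h a b =>
    rcases a with u | i <;> rcases b with v | j <;> rw [mem_edgeSet] at hg
    · exact Or.inl ⟨u, v, hg.1, rfl, hg.2⟩
    · obtain rfl : u = en j := hg
      exact Or.inr (Or.inl ⟨j, rfl⟩)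
    · obtain rfl : v = en i := hg
      exact Or.inr (Or.inl ⟨i, Sym2.eq_swap⟩)
    · rcases hg with rfl | rfl
      · exact Or.inr (Or.inr ⟨i, rfl⟩)
      · exact Or.inr (Or.inr ⟨j, Sym2.eq_swap⟩)

/-- The sides of a convex quadrilateral have disjoint interiors. -/
theorem chord_ne_chord {z : Fin 4 → ℝ × ℝ}
    (hz : ∀ i, side (z i) (z (i + 2)) (z (i + 1)) * side (z i) (z (i + 2)) (z (i + 3)) < 0)
    {k l : Fin 4} (hkl : k ≠ l) {s t : ℝ} (hs : s ∈ Set.Ioo (0 : ℝ) 1)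
    (ht : t ∈ Set.Ioo (0 : ℝ) 1) : chord (z k) (z (k + 1)) s ≠ chord (z l) (z (l + 1)) t := by
  intro hst
  obtain ⟨i, hk, hl⟩ : ∃ i, (k = i ∨ k = i + 1) ∧ (l = i + 2 ∨ l = i + 3) := by
    clear * - hkl
    decide +revert
  have hz := hz i
  have key {a b A B : ℝ} (ha : 0 < a) (hb : 0 < b) (hAB : A * B < 0) (h : a * A = b * B) :
      False := by
    have h1 : 0 ≤ a * A ^ 2 := by positivity
    have h2 : a * A ^ 2 = b * (A * B) := by linear_combination A * h
    nlinarith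
  have h1 := congrArg (side (z i) (z (i + 2))) hst
  have e1 : i + 1 + 1 = i + 2 := by rw [add_assoc]; rfl
  have e2 : i + 2 + 1 = i + 3 := by rw [add_assoc]; rfl
  have e3 : i + 3 + 1 = i := by rw [add_assoc, show (3 : Fin 4) + 1 = 0 from rfl, add_zero]
  rcases hk with rfl | rfl <;> rcases hl with rfl | rfl <;>
    simp only [side_chord, e1, e2, e3, side_left, side_right, mul_zero, zero_add, add_zero] at h1
  · exact key hs.1 ht.1 hz h1
  · exact key hs.1 (sub_pos.2 ht.2) hz h1
  · exact key (sub_pos.2 hs.2) ht.1 hz h1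
  · exact key (sub_pos.2 hs.2) (sub_pos.2 ht.2) hz h1

/-- If the crossing edges leave the disc in crossing position, then replacing the crossing by
the convex quadrilateral they span on the circle gives a planar drawing of `uncross G en`. -/
theorem CrossingModel.exists_planar_drawing (h : CrossingModel d en p r pend)
    (hz : ∀ i, side (pend i 1) (pend (i + 2) 1) (pend (i + 1) 1) *
      side (pend i 1) (pend (i + 2) 1) (pend (i + 3) 1) < 0) :
    ∃ D : Drawing (uncross G en), D.IsPlanar ∧ (∀ i, D.vpos (.inr i) = pend i 1) ∧
      (∀ v, r ^ 2 ≤ sqDist p (D.vpos v)) ∧ ∀ g : (uncross G en).edgeSet,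
        (∃ u, .inl u ∈ g.1) → ∀ t ∈ Set.Icc (0 : ℝ) 1,
        r ^ 2 ≤ sqDist p (D.arc g t) := by
  have hi1 (i : Fin 4) : i ≠ i + 1 := by decide +revert
  let pos : V ⊕ Fin 4 → ℝ × ℝ := Sum.elim d.vpos fun i => pend i 1
  have key (g : (uncross G en).edgeSet) : ∃ γ : ℝ → ℝ × ℝ, ContinuousOn γ (Set.Icc 0 1) ∧
      Set.InjOn γ (Set.Icc 0 1) ∧
      (∃ u v, g.1 = s(u, v) ∧ γ 0 = pos u ∧ γ 1 = pos v) ∧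
      ((∃ k : G.edgeSet, g.1 = k.1.map .inl ∧ (∀ i, k.1 ≠ s(en i, en (i + 2))) ∧ γ = d.arc k) ∨
        (∃ i, g.1 = s(.inl (en i), .inr i) ∧ γ = pend i) ∨
        ∃ i, g.1 = s(.inr i, .inr (i + 1)) ∧ γ = chord (pend i 1) (pend (i + 1) 1)) := by
    rcases uncross_edge_cases g with ⟨u, v, huv, hg, hne⟩ | ⟨i, hg⟩ | ⟨i, hg⟩
    · obtain ⟨a, b, hab, ha, hb⟩ := d.ends ⟨s(u, v), huv⟩
      refine ⟨d.arc ⟨s(u, v), huv⟩, d.cont _, d.injOn _, ⟨.inl a, .inl b, ?_, ha, hb⟩,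
        Or.inl ⟨⟨s(u, v), huv⟩, hg, hne, rfl⟩⟩
      exact hg.trans (congrArg (Sym2.map Sum.inl) hab)
    · exact ⟨pend i, (h.pendant i).cont, (h.pendant i).injOn,
        ⟨.inl (en i), .inr i, hg, (h.pendant i).start, rfl⟩, Or.inr (Or.inl ⟨i, hg, rfl⟩)⟩
    · exact ⟨chord (pend i 1) (pend (i + 1) 1), (continuous_chord _ _).continuousOn,
        (chord_injective (h.pend_one_ne (hi1 i))).injOn,
        ⟨.inr i, .inr (i + 1), hg, chord_zero _ _, chord_one _ _⟩,
        Or.inr (Or.inr ⟨i, hg, rfl⟩)⟩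
  choose γ hc hinj hends hγ using key
  have hpos (v) : r ^ 2 ≤ sqDist p (pos v) := by
    rcases v with v | i
    · exact (h.vert_outside v).le
    · exact (h.pendant i).finish.ge
  have hout (g : (uncross G en).edgeSet) : (∀ t ∈ Set.Icc (0 : ℝ) 1, r ^ 2 ≤ sqDist p (γ g t)) ∨
      ∃ i, g.1 = s(.inr i, .inr (i + 1)) ∧ γ g = chord (pend i 1) (pend (i + 1) 1) := by
    rcases hγ g with ⟨k, -, hk, e⟩ | ⟨i, hg, e⟩ | hi
    · exact Or.inl fun t ht => e ▸ (h.edge_outside k hk t ht).le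
    · exact Or.inl fun t ht => e ▸ (h.pendant i).le_sqDist ht
    · exact Or.inr hi
  refine ⟨⟨pos, ?_, γ, hc, hinj, hends, ?_⟩, ?_, fun i => rfl, hpos, ?_⟩
  · rintro (u | i) (v | j) huv
    · exact congrArg _ (d.vinj huv)
    · exact absurd huv.symm (h.pend_ne_vpos j (by simp) u)
    · exact absurd huv (h.pend_ne_vpos i (by simp) v)
    · by_contra hij
      exact h.pend_one_ne (fun e => hij (congrArg _ e)) huv
  · intro g w t ht
    rcases hγ g with ⟨k, -, hk, e⟩ | ⟨i, -, e⟩ | ⟨i, -, e⟩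
    · rw [e]
      rcases w with w | j
      · exact d.interiorAvoidsVertices k w t ht
      · exact (h.pend_ne_arc j (by simp) hk ht).symm
    · rw [e]
      rcases w with w | j
      · exact h.pend_ne_vpos i ⟨ht.1, ht.2.le⟩ w
      · intro ht1
        by_cases hij : i = j
        · subst hij
          exact ht.2.ne ((h.pendant i).injOn ⟨ht.1.le, ht.2.le⟩ (by simp) ht1)
        · exact h.disj i j hij t ⟨ht.1, ht.2.le⟩ 1 (by simp) ht1
    · intro hw
      have := h.sqDist_chord_lt (hi1 i) ht
      rw [← e, hw] at this
      exact this.not_ge (hpos w)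
  · intro g k hgk
    rw [Set.eq_empty_iff_forall_notMem]
    rintro - ⟨⟨s, hs, rfl⟩, ⟨t, ht, hst⟩⟩
    change γ k t = γ g s at hst
    rcases hout g with hg | ⟨i, hi, hg⟩ <;> rcases hout k with hk | ⟨j, hj, hk⟩
    · rcases hγ g with ⟨a, ha, ha', ea⟩ | ⟨i, hi, ei⟩ | ⟨i, -, ei⟩ <;>
        rcases hγ k with ⟨b, hb, hb', eb⟩ | ⟨j, hj, ej⟩ | ⟨j, -, ej⟩
      · rw [ea, eb] at hst
        refine h.edge_disj b hb' a ?_ t ht s hs hst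
        rintro rfl
        exact hgk (Subtype.ext (ha.trans hb.symm))
      · rw [ea, ej] at hst
        exact h.pend_ne_arc j ⟨ht.1, ht.2.le⟩ ha' hs hst
      · have := h.sqDist_chord_lt (hi1 j) ht
        rw [← ej] at this
        exact absurd (hk t ⟨ht.1.le, ht.2.le⟩) this.not_ge
      · rw [ei, eb] at hst
        exact h.pend_ne_arc i ⟨hs.1, hs.2.le⟩ hb' ht hst.symm
      · rw [ei, ej] at hst
        refine h.disj j i ?_ t ⟨ht.1, ht.2.le⟩ s ⟨hs.1, hs.2.le⟩ hst
        rintro rfl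
        exact hgk (Subtype.ext (hi.trans hj.symm))
      · have := h.sqDist_chord_lt (hi1 j) ht
        rw [← ej] at this
        exact absurd (hk t ⟨ht.1.le, ht.2.le⟩) this.not_ge
      all_goals
        have := h.sqDist_chord_lt (hi1 i) hs
        rw [← ei] at this
        exact absurd (hg s ⟨hs.1.le, hs.2.le⟩) this.not_ge
    · have := h.sqDist_chord_lt (hi1 j) ht
      rw [← hk, hst] at this
      exact this.not_ge (hg s ⟨hs.1.le, hs.2.le⟩)
    · have := h.sqDist_chord_lt (hi1 i) hs
      rw [← hg, ← hst] at this
      exact this.not_ge (hk t ⟨ht.1.le, ht.2.le⟩)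
    · rw [hg, hk] at hst
      refine chord_ne_chord (z := fun i => pend i 1) hz ?_ ht hs hst
      rintro rfl
      exact hgk (Subtype.ext (hi.trans hj.symm))
  · rintro g ⟨u, hu⟩ t ht
    rcases hout g with hg | ⟨i, hi, -⟩
    · exact hg t ht
    · simp [hi] at hu

end Uncross

section UncrossConnected

variable {V : Type*} {G : SimpleGraph V} {en : Fin 4 → V}

/-- The vertex of `G` that a neighbour in `uncross G en` of a vertex of `G` stands for. -/
def uncrossProj (en : Fin 4 → V) : V ⊕ Fin 4 → V := Sum.elim id fun i => en (i + 2)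

theorem IsEdgePair.adj_uncrossProj (h : IsEdgePair G en) {v : V} {x : V ⊕ Fin 4}
    (hx : (uncross G en).Adj (.inl v) x) : G.Adj v (uncrossProj en x) := by
  rcases x with w | i
  · exact hx.1
  · obtain rfl : v = en i := hx
    exact h.adj i

theorem IsEdgePair.uncrossProj_inj (h : IsEdgePair G en) {v : V} {x y : V ⊕ Fin 4}
    (hx : (uncross G en).Adj (.inl v) x) (hy : (uncross G en).Adj (.inl v) y)
    (hxy : uncrossProj en x = uncrossProj en y) : x = y := by
  rcases x with w | i <;> rcases y with w' | j
  · exact congrArg _ hxy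
  · obtain rfl : v = en j := hy
    obtain rfl : w = en (j + 2) := hxy
    exact absurd rfl (hx.2 j)
  · obtain rfl : v = en i := hx
    obtain rfl : w' = en (i + 2) := hxy.symm
    exact absurd rfl (hy.2 i)
  · obtain rfl : v = en i := hx
    replace hy : en i = en j := hy
    replace hxy : en (i + 2) = en (j + 2) := hxy
    by_contra hij
    refine h.edge_ne (i := i) (j := j) (fun e => hij (congrArg _ e.symm)) ?_ (by rw [hxy, hy])
    rintro rfl
    exact (h.adj i).ne hy

theorem exists_uncrossProj {v w : V} (hvw : G.Adj v w) :
    ∃ x, (uncross G en).Adj (.inl v) x ∧ uncrossProj en x = w ∧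
      ((∀ i, s(v, w) ≠ s(en i, en (i + 2))) ∧ x = .inl w ∨
        ∃ i, v = en i ∧ w = en (i + 2) ∧ x = .inr i) := by
  by_cases hne : ∀ i, s(v, w) ≠ s(en i, en (i + 2))
  · exact ⟨.inl w, ⟨hvw, hne⟩, rfl, Or.inl ⟨hne, rfl⟩⟩
  push Not at hne
  obtain ⟨i, hi⟩ := hne
  obtain ⟨j, rfl, rfl⟩ : ∃ j, v = en j ∧ w = en (j + 2) := by
    rcases Sym2.eq_iff.1 hi with ⟨h1, h2⟩ | ⟨h1, h2⟩
    · exact ⟨i, h1, h2⟩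
    · refine ⟨i + 2, h1, h2.trans ?_⟩
      rw [add_assoc, show (2 : Fin 4) + 2 = 0 from rfl, add_zero]
  exact ⟨.inr j, rfl, rfl, Or.inr ⟨j, rfl, rfl, rfl⟩⟩

theorem IsEdgePair.ncard_neighborSet_uncross (h : IsEdgePair G en)
    (hG : ∀ v, (G.neighborSet v).ncard = 3) (x : V ⊕ Fin 4) :
    ((uncross G en).neighborSet x).ncard = 3 := by
  rcases x with v | i
  · rw [← hG v]
    refine Set.ncard_congr (fun x _ => uncrossProj en x) (fun x hx => h.adj_uncrossProj hx)
      (fun x y hx hy hxy => h.uncrossProj_inj hx hy hxy) fun w hw => ?_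
    obtain ⟨x, hx, rfl, -⟩ := exists_uncrossProj (en := en) hw
    exact ⟨x, hx, rfl⟩
  · have : (uncross G en).neighborSet (.inr i) = {.inl (en i), .inr (i + 1), .inr (i + 3)} := by
      ext x
      rcases x with v | j
      · simp
      · have : (i = j + 1) ↔ (j = i + 3) := by decide +revert
        simp [this]
    rw [this, Set.ncard_eq_three]
    refine ⟨_, _, _, by simp, by simp, ?_, rfl⟩
    simp

theorem reachable_map_of_adj {W : Type*} {H : SimpleGraph W} {f : V → W}
    (hf : ∀ u v, G.Adj u v → H.Reachable (f u) (f v)) {u v : V} (huv : G.Reachable u v) :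
    H.Reachable (f u) (f v) := by
  obtain ⟨q⟩ := huv
  induction q with
  | nil => exact .rfl
  | cons hadj _ ih => exact (hf _ _ hadj).trans ih

theorem reachable_of_three_edges {H : SimpleGraph (V ⊕ Fin 4)} {k : Fin 4}
    (hk : ∀ i, i ≠ k → H.Adj (.inr i) (.inr (i + 1))) (i j : Fin 4) :
    H.Reachable (.inr i) (.inr j) := by
  suffices key : ∀ i, H.Reachable (.inr k) (.inr i) from (key i).symm.trans (key j)
  have h1 : H.Reachable (.inr (k + 1)) (.inr (k + 2)) := by
    simpa [add_assoc, show (1 : Fin 4) + 1 = 2 from rfl] using (hk (k + 1) (by simp)).reachable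
  have h2 : H.Reachable (.inr (k + 2)) (.inr (k + 3)) := by
    simpa [add_assoc, show (2 : Fin 4) + 1 = 3 from rfl] using (hk (k + 2) (by simp)).reachable
  have h3 : H.Reachable (.inr (k + 3)) (.inr k) := by
    simpa [add_assoc, show (3 : Fin 4) + 1 = 0 from rfl] using (hk (k + 3) (by simp)).reachable
  intro i
  have : i = k ∨ i = k + 1 ∨ i = k + 2 ∨ i = k + 3 := by
    clear * -
    decide +revert
  rcases this with rfl | rfl | rfl | rfl
  · exact .rfl
  · exact ((h1.trans h2).trans h3).symm
  · exact (h2.trans h3).symm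
  · exact h3.symm

/-- A sufficient condition for a subgraph of `uncross G en` to be connected. -/
theorem preconnected_of_uncross {H : SimpleGraph (V ⊕ Fin 4)} {G' : SimpleGraph V}
    (hG' : G'.Preconnected) (hle : G' ≤ G) {k : Fin 4}
    (hk : ∀ i, i ≠ k → H.Adj (.inr i) (.inr (i + 1)))
    (hinl : ∀ u v, G'.Adj u v → (∀ i, s(u, v) ≠ s(en i, en (i + 2))) → H.Adj (.inl u) (.inl v))
    (hinr : ∀ i, G'.Adj (en i) (en (i + 2)) → H.Adj (.inl (en i)) (.inr i))
    (hex : ∃ i, H.Adj (.inl (en i)) (.inr i)) : H.Preconnected := by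
  have hcirc := reachable_of_three_edges hk
  have hV (u v : V) : H.Reachable (.inl u) (.inl v) := by
    refine reachable_map_of_adj (fun u v huv => ?_) (hG' u v)
    obtain ⟨x, -, -, ⟨hne, -⟩ | ⟨i, rfl, rfl, -⟩⟩ :=
      exists_uncrossProj (en := en) (hle huv)
    · exact (hinl u v huv hne).reachable
    · refine ((hinr i huv).reachable.trans (hcirc i (i + 2))).trans (hinr (i + 2) ?_).symm.reachable
      rw [add_assoc, show (2 : Fin 4) + 2 = 0 from rfl, add_zero]
      exact huv.symm
  obtain ⟨i, hi⟩ := hex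
  have hb (j) (v) : H.Reachable (.inr j) (.inl v) :=
    ((hcirc j i).trans hi.symm.reachable).trans (hV _ _)
  rintro (u | j) (v | l)
  exacts [hV u v, (hb l u).symm, hb j v, hcirc j l]

theorem IsEdgePair.twoEdgeConnected_uncross (h : IsEdgePair G en) (hG : TwoEdgeConnected G) :
    TwoEdgeConnected (uncross G en) := by
  have hdel (g : Sym2 V) (hg : g ∈ G.edgeSet) : (G.deleteEdges {g}).Preconnected := by
    induction g with
    | h u v => exact (hG.1.connected_delete_edge_of_not_isBridge (hG.2 _ hg)).preconnected
  have key (g : (uncross G en).edgeSet) : ((uncross G en).deleteEdges {g.1}).Preconnected := by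
    rcases uncross_edge_cases g with ⟨u, v, huv, hg, hne⟩ | ⟨k, hg⟩ | ⟨k, hg⟩ <;> rw [hg]
    · refine preconnected_of_uncross (hdel s(u, v) huv) (deleteEdges_le _) (k := 0) (en := en)
        ?_ ?_ ?_ ⟨0, ?_⟩
      · intro i _
        simp
      · intro a b hab hne'
        rw [deleteEdges_adj] at hab ⊢
        refine ⟨⟨hab.1, hne'⟩, fun e => hab.2 ?_⟩
        simpa using e
      · intro i _
        simp
      · simp
    · refine preconnected_of_uncross (hdel s(en k, en (k + 2)) (h.adj k)) (deleteEdges_le _)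
        (k := 0) (en := en) ?_ ?_ ?_ ⟨k + 1, ?_⟩
      · intro i _
        simp
      · intro a b hab hne'
        rw [deleteEdges_adj] at hab ⊢
        exact ⟨⟨hab.1, hne'⟩, by simp⟩
      · intro i hi
        rw [deleteEdges_adj] at hi ⊢
        refine ⟨rfl, fun e => hi.2 ?_⟩
        obtain rfl : i = k := (by simpa using e : en i = en k ∧ i = k).2
        rfl
      · simp
    · refine preconnected_of_uncross hG.1.preconnected le_rfl (k := k) (en := en) ?_ ?_ ?_ ⟨0, ?_⟩
      · intro i hi
        have : ¬ (i = k + 1 ∧ i + 1 = k) := by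
          clear * -
          decide +revert
        simpa [hi] using this
      · intro a b hab hne'
        rw [deleteEdges_adj]
        exact ⟨⟨hab, hne'⟩, by simp⟩
      · intro i _
        simp
      · simp
  have : Nonempty (V ⊕ Fin 4) := ⟨.inr 0⟩
  refine ⟨⟨(key ⟨s(.inr 0, .inr 1), Or.inl rfl⟩).mono (deleteEdges_le _)⟩, fun g hg => ?_⟩
  have := key ⟨g, hg⟩
  induction g with
  | h a b => exact fun hbr => hbr (this a b)

end UncrossConnected

section Kempe

variable {V : Type*} {G : SimpleGraph V} {en : Fin 4 → V} {col : Sym2 (V ⊕ Fin 4) → Fin 3}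

/-- The colours of the edges of `uncross G en` are distinct around each vertex of `G`. -/
def IsOuterColoring (G : SimpleGraph V) (en : Fin 4 → V) (col : Sym2 (V ⊕ Fin 4) → Fin 3) :
    Prop :=
  ∀ v y z, (uncross G en).Adj (.inl v) y → (uncross G en).Adj (.inl v) z → y ≠ z →
    col s(.inl v, y) ≠ col s(.inl v, z)

/-- The colour of a pendant edge. -/
def pendantColor (en : Fin 4 → V) (col : Sym2 (V ⊕ Fin 4) → Fin 3) (i : Fin 4) : Fin 3 :=
  col s(.inl (en i), .inr i)

theorem IsOuterColoring.threeEdgeColorable (hcol : IsOuterColoring G en col)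
    (hq : ∀ i, pendantColor en col (i + 2) = pendantColor en col i) : ThreeEdgeColorable G := by
  have key (g : G.edgeSet) : ∃ a, ∀ v w, g.1 = s(v, w) →
      ∃ x, (uncross G en).Adj (.inl v) x ∧ uncrossProj en x = w ∧ col s(.inl v, x) = a := by
    obtain ⟨g, hg⟩ := g
    induction g with
    | h a b =>
      obtain ⟨x, hx, -, ⟨-, rfl⟩ | ⟨i, rfl, rfl, rfl⟩⟩ :=
        exists_uncrossProj (en := en) (v := a) (w := b) hg
      · refine ⟨col s(.inl a, .inl b), fun v w hvw => ?_⟩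
        rcases Sym2.eq_iff.1 hvw with ⟨rfl, rfl⟩ | ⟨rfl, rfl⟩
        · exact ⟨_, hx, rfl, rfl⟩
        · exact ⟨_, hx.symm, rfl, congrArg col Sym2.eq_swap⟩
      · refine ⟨pendantColor en col i, fun v w hvw => ?_⟩
        rcases Sym2.eq_iff.1 hvw with ⟨rfl, rfl⟩ | ⟨rfl, rfl⟩
        · exact ⟨_, hx, rfl, rfl⟩
        · refine ⟨.inr (i + 2), rfl, ?_, hq i⟩
          change en (i + 2 + 2) = en i
          rw [add_assoc, show (2 : Fin 4) + 2 = 0 from rfl, add_zero]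
  choose c hc using key
  refine ⟨c, fun e f hef ⟨v, hve, hvf⟩ => ?_⟩
  obtain ⟨w, hw⟩ := hve
  obtain ⟨w', hw'⟩ := hvf
  obtain ⟨x, hx, rfl, hxc⟩ := hc e v w hw
  obtain ⟨y, hy, rfl, hyc⟩ := hc f v w' hw'
  rw [← hxc, ← hyc]
  refine hcol v x y hx hy ?_
  rintro rfl
  exact hef (Subtype.ext (hw.trans hw'.symm))

theorem IsOuterColoring.existsUnique (hcol : IsOuterColoring G en col)
    (h3 : ∀ x, ((uncross G en).neighborSet x).ncard = 3) (v : V) (a : Fin 3) :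
    ∃! x, (uncross G en).Adj (.inl v) x ∧ col s(.inl v, x) = a := by
  have hfin : Finite ((uncross G en).neighborSet (.inl v)) :=
    Set.finite_of_ncard_ne_zero (by rw [h3]; decide)
  let f : (uncross G en).neighborSet (.inl v) → Fin 3 := fun x => col s(.inl v, x.1)
  have hf : Function.Injective f := by
    intro x y hxy
    by_contra hne
    exact hcol v x y x.2 y.2 (fun e => hne (Subtype.ext e)) hxy
  have hb : Function.Bijective f := by
    have := Fintype.ofFinite ((uncross G en).neighborSet (.inl v))
    rw [Fintype.bijective_iff_injective_and_card]
    refine ⟨hf, ?_⟩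
    rw [← Nat.card_eq_fintype_card, Nat.card_coe_set_eq, h3, Fintype.card_fin]
  obtain ⟨x, hx⟩ := hb.2 a
  refine ⟨x, ⟨x.2, hx⟩, fun y hy => ?_⟩
  exact congrArg Subtype.val (hf (a₁ := ⟨y, hy.1⟩) (hy.2.trans hx.symm))

/-- The edges of `uncross G en` with a colour in `A`, apart from those of the new circuit. -/
def colorGraph (G : SimpleGraph V) (en : Fin 4 → V) (col : Sym2 (V ⊕ Fin 4) → Fin 3)
    (A : Set (Fin 3)) : SimpleGraph (V ⊕ Fin 4) where
  Adj x y := (uncross G en).Adj x y ∧ (x.isLeft ∨ y.isLeft) ∧ col s(x, y) ∈ A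
  symm := ⟨fun x _ h => ⟨h.1.symm, h.2.1.symm, Sym2.eq_swap (a := x) ▸ h.2.2⟩⟩
  loopless := ⟨fun _ h => h.1.ne rfl⟩

theorem colorGraph_adj_inr {A : Set (Fin 3)} {i : Fin 4} {x : V ⊕ Fin 4} :
    (colorGraph G en col A).Adj (.inr i) x ↔ x = .inl (en i) ∧ pendantColor en col i ∈ A := by
  rcases x with v | j
  · constructor
    · rintro ⟨h1, -, h2⟩
      obtain rfl : v = en i := h1
      exact ⟨rfl, by rwa [pendantColor, Sym2.eq_swap]⟩
    · rintro ⟨h1, h2⟩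
      obtain rfl : v = en i := Sum.inl_injective h1
      exact ⟨rfl, Or.inr rfl, by rwa [pendantColor, Sym2.eq_swap] at h2⟩
  · simp [colorGraph]

/-- Parity lemma for the four pendant edges. -/
theorem IsOuterColoring.even_card_add [Fintype V] (hcol : IsOuterColoring G en col)
    (h3 : ∀ x, ((uncross G en).neighborSet x).ncard = 3) (a : Fin 3) :
    Even (Fintype.card V + (Finset.univ.filter fun i => pendantColor en col i = a).card) := by
  classical
  have hinl (v : V) : (colorGraph G en col {a}).degree (.inl v) = 1 := by
    rw [degree_eq_one_iff_existsUnique_adj]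
    obtain ⟨x, hx, hu⟩ := hcol.existsUnique h3 v a
    exact ⟨x, ⟨hx.1, Or.inl rfl, hx.2⟩, fun y hy => hu y ⟨hy.1, hy.2.2⟩⟩
  have hinr (i : Fin 4) : Odd ((colorGraph G en col {a}).degree (.inr i)) ↔
      pendantColor en col i = a := by
    by_cases hi : pendantColor en col i = a
    · simp only [hi, iff_true]
      rw [degree_eq_one_iff_existsUnique_adj.2, Nat.odd_iff]
      exact ⟨.inl (en i), colorGraph_adj_inr.2 ⟨rfl, hi⟩, fun y hy => (colorGraph_adj_inr.1 hy).1⟩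
    · simp only [hi, iff_false]
      rw [(degree_eq_zero_iff_notMem_support _ _).2, Nat.odd_iff]
      · decide
      · rintro ⟨y, hy⟩
        exact hi (colorGraph_adj_inr.1 hy).2
  have := (colorGraph G en col {a}).even_card_odd_degree_vertices
  convert this using 1
  rw [← Finset.card_univ, ← Finset.card_disjSum]
  congr 1
  ext (v | i)
  · simp [hinl]
  · simp [hinr]

theorem IsOuterColoring.pendantColor_eq_iff [Fintype V] (hcol : IsOuterColoring G en col)
    (h3 : ∀ x, ((uncross G en).neighborSet x).ncard = 3) :
    pendantColor en col 0 = pendantColor en col 2 ↔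
      pendantColor en col 1 = pendantColor en col 3 := by
  have h := hcol.even_card_add h3
  generalize pendantColor en col = q at h ⊢
  have h0 (a b : Fin 3) := (Nat.even_add.1 (h a)).symm.trans (Nat.even_add.1 (h b))
  clear h h3 hcol
  have : ∀ q0 q1 q2 q3 : Fin 3, (∀ a b,
    (Even (Finset.univ.filter fun i => (![q0, q1, q2, q3] : Fin 4 → Fin 3) i = a).card ↔
      Even (Finset.univ.filter fun i => (![q0, q1, q2, q3] : Fin 4 → Fin 3) i = b).card)) →
      (q0 = q2 ↔ q1 = q3) := by
    decide
  refine this (q 0) (q 1) (q 2) (q 3) ?_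
  rwa [show (![q 0, q 1, q 2, q 3] : Fin 4 → Fin 3) = q by ext i; fin_cases i <;> rfl]

/-- Kempe exchange: swap the colours `x` and `y` on a union `C` of Kempe chains. -/
theorem IsOuterColoring.exists_swap (hcol : IsOuterColoring G en col) {x y : Fin 3}
    {C : Set (V ⊕ Fin 4)}
    (hC : ∀ u v, (colorGraph G en col {x, y}).Adj u v → u ∈ C → v ∈ C) :
    ∃ col', IsOuterColoring G en col' ∧
      (∀ j, .inr j ∈ C → pendantColor en col' j = Equiv.swap x y (pendantColor en col j)) ∧
      ∀ j, .inr j ∉ C → pendantColor en col' j = pendantColor en col j := by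
  classical
  let col' : Sym2 (V ⊕ Fin 4) → Fin 3 := fun e =>
    if ∃ z ∈ e, z ∈ C then Equiv.swap x y (col e) else col e
  have h1 {u v} (hu : u ∈ C) : col' s(u, v) = Equiv.swap x y (col s(u, v)) :=
    if_pos ⟨u, Sym2.mem_mk_left u v, hu⟩
  have h2 {u v} (hu : u ∉ C) (huv : (uncross G en).Adj u v) (hl : u.isLeft ∨ v.isLeft) :
      col' s(u, v) = col s(u, v) := by
    by_cases hv : v ∈ C
    · have hne : col s(u, v) ∉ ({x, y} : Set (Fin 3)) := fun hm =>
        hu (hC v u (Adj.symm (G := colorGraph G en col {x, y}) ⟨huv, hl, hm⟩) hv)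
      rw [Sym2.eq_swap, h1 hv, Sym2.eq_swap]
      simp only [Set.mem_insert_iff, Set.mem_singleton_iff, not_or] at hne
      exact Equiv.swap_apply_of_ne_of_ne hne.1 hne.2
    · refine if_neg ?_
      rintro ⟨z, hz, hzC⟩
      rcases Sym2.mem_iff.1 hz with rfl | rfl
      exacts [hu hzC, hv hzC]
  refine ⟨col', fun v a b ha hb hab => ?_, fun j hj => ?_, fun j hj => ?_⟩
  · by_cases hv : .inl v ∈ C
    · rw [h1 hv, h1 hv]
      exact fun e => hcol v a b ha hb hab ((Equiv.swap x y).injective e)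
    · rw [h2 hv ha (Or.inl rfl), h2 hv hb (Or.inl rfl)]
      exact hcol v a b ha hb hab
  · rw [pendantColor, Sym2.eq_swap, h1 hj, Sym2.eq_swap]
    rfl
  · rw [pendantColor, Sym2.eq_swap, h2 hj (uncross_adj_inr_inl.2 rfl) (Or.inr rfl), Sym2.eq_swap]
    rfl

theorem mem_support_of_adj_of_mem_support {W : Type*} {K : SimpleGraph W}
    (h2 : ∀ u a b c, K.Adj u a → K.Adj u b → K.Adj u c → a = b ∨ b = c ∨ a = c) {a b : W}
    (hb : ∀ u v, K.Adj b u → K.Adj b v → u = v) (q : K.Walk a b) (hq : q.IsPath) {u w : W}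
    (hu : u ∈ q.support) (hua : u ≠ a) (huw : K.Adj u w) : w ∈ q.support := by
  induction q with
  | nil => exact absurd (by simpa using hu) hua
  | cons hadj q ih =>
    rw [Walk.support_cons, List.mem_cons] at hu ⊢
    rw [Walk.cons_isPath_iff] at hq
    replace hu := hu.resolve_left hua
    rename_i a a' b
    by_cases hua' : u = a'
    · subst hua'
      cases q with
      | nil => exact Or.inl (hb _ _ huw hadj.symm)
      | cons hadj' q =>
        rename_i a''
        have hmem : a'' ∈ (Walk.cons hadj' q).support := by simp
        rcases h2 u w a a'' huw hadj.symm hadj' with h | h | h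
        · exact Or.inl h
        · exact absurd (h ▸ hmem) hq.2
        · exact Or.inr (h ▸ hmem)
    · exact Or.inr (ih hb hq.1 hu hua')

theorem eq_or_eq_of_mem_support {W : Type*} {K : SimpleGraph W} {a b u : W} (q : K.Walk a b)
    (hq : q.IsPath) (hu : u ∈ q.support) (h1 : ∀ v w, K.Adj u v → K.Adj u w → v = w) :
    u = a ∨ u = b := by
  induction q with
  | nil => exact Or.inl (by simpa using hu)
  | cons hadj q ih =>
    rw [Walk.support_cons, List.mem_cons] at hu
    rw [Walk.cons_isPath_iff] at hq
    rcases hu with hu | hu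
    · exact Or.inl hu
    rcases ih hq.1 hu with rfl | h
    · cases q with
      | nil => exact Or.inr rfl
      | cons hadj' q =>
        have := h1 _ _ hadj.symm hadj'
        subst this
        exact absurd (by simp) hq.2
    · exact Or.inr h

/-- In a graph of maximum degree two, a component contains at most two vertices of degree at
most one. -/
theorem eq_or_eq_of_reachable {W : Type*} {K : SimpleGraph W}
    (h2 : ∀ u a b c, K.Adj u a → K.Adj u b → K.Adj u c → a = b ∨ b = c ∨ a = c) {a b u : W}
    (hab : a ≠ b) (h : K.Reachable a b) (hau : K.Reachable a u)
    (h1 : ∀ z ∈ ({a, b, u} : Set W), ∀ v w, K.Adj z v → K.Adj z w → v = w) : u = a ∨ u = b := by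
  classical
  obtain ⟨q, hq⟩ := h.exists_isPath
  refine eq_or_eq_of_mem_support q hq ?_ (h1 u (by simp))
  have hclosed (z w) (hz : z ∈ q.support) (hzw : K.Adj z w) : w ∈ q.support := by
    by_cases hza : z = a
    · subst hza
      cases q with
      | nil => exact absurd rfl hab
      | cons hadj q =>
        rw [h1 z (by simp) _ _ hzw hadj]
        simp
    · exact mem_support_of_adj_of_mem_support h2 (h1 b (by simp)) q hq hz hza hzw
  obtain ⟨p⟩ := hau
  have key {z w} (p : K.Walk z w) (hz : z ∈ q.support) : w ∈ q.support := by
    induction p with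
    | nil => exact hz
    | cons hadj _ ih => exact ih (hclosed _ _ hz hadj)
  exact key p q.start_mem_support

end Kempe

section Chains

variable {W : Type*} {H : SimpleGraph W}

/-- The points of a drawing on the component of `a` in a subgraph `K`. -/
def Drawing.trace (D : Drawing H) (K : SimpleGraph W) (a : W) : Set (ℝ × ℝ) :=
  {z | ∃ u, K.Reachable a u ∧ D.vpos u = z} ∪
    {z | ∃ g : H.edgeSet, g.1 ∈ K.edgeSet ∧ (∃ u ∈ g.1, K.Reachable a u) ∧ z ∈ D.arcInt g}

theorem Drawing.arc_mem_trace (D : Drawing H) {K : SimpleGraph W} {a u v : W}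
    (ha : K.Reachable a u) (huv : K.Adj u v) (hH : s(u, v) ∈ H.edgeSet) {t : ℝ}
    (ht : t ∈ Set.Icc (0 : ℝ) 1) : D.arc ⟨s(u, v), hH⟩ t ∈ D.trace K a := by
  obtain ⟨x, y, hxy, hx, hy⟩ := D.ends ⟨s(u, v), hH⟩
  have hr (z) (hz : z ∈ s(u, v)) : K.Reachable a z := by
    rcases Sym2.mem_iff.1 hz with rfl | rfl
    exacts [ha, ha.trans huv.reachable]
  rcases ht.1.eq_or_lt with rfl | h0
  · exact Or.inl ⟨x, hr x (by rw [show s(u, v) = s(x, y) from hxy]; simp), hx.symm⟩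
  rcases ht.2.eq_or_lt with rfl | h1
  · exact Or.inl ⟨y, hr y (by rw [show s(u, v) = s(x, y) from hxy]; simp), hy.symm⟩
  exact Or.inr ⟨⟨s(u, v), hH⟩, huv, ⟨u, by simp, ha⟩, t, ⟨h0, h1⟩, rfl⟩

theorem Drawing.joinedIn_trace (D : Drawing H) {K : SimpleGraph W} (hK : K ≤ H) {a b : W}
    (hab : K.Reachable a b) : JoinedIn (D.trace K a) (D.vpos a) (D.vpos b) := by
  obtain ⟨q⟩ := hab
  suffices key : ∀ {u v : W} (_ : K.Walk u v), K.Reachable a u →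
      JoinedIn (D.trace K a) (D.vpos u) (D.vpos v) from key q .rfl
  intro u v q
  induction q with
  | nil => exact fun hu => JoinedIn.refl (Or.inl ⟨_, hu, rfl⟩)
  | @cons u v w hadj q ih =>
    intro hu
    refine JoinedIn.trans ?_ (ih (hu.trans hadj.reachable))
    have hH : s(u, v) ∈ H.edgeSet := hK hadj
    have hj : JoinedIn (D.trace K a) (D.arc ⟨s(u, v), hH⟩ 0) (D.arc ⟨s(u, v), hH⟩ 1) := by
      refine JoinedIn.ofLine (f := D.arc ⟨s(u, v), hH⟩) (D.cont _) rfl rfl ?_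
      rintro - ⟨t, ht, rfl⟩
      exact D.arc_mem_trace hu hadj hH ht
    obtain ⟨x, y, hxy, hx, hy⟩ := D.ends ⟨s(u, v), hH⟩
    rw [hx, hy] at hj
    rcases Sym2.eq_iff.1 hxy with ⟨rfl, rfl⟩ | ⟨rfl, rfl⟩
    exacts [hj, hj.symm]

theorem Drawing.IsPlanar.reachable_of_mem_trace {D : Drawing H} (hD : D.IsPlanar)
    {K : SimpleGraph W} {a b : W} {z : ℝ × ℝ} (ha : z ∈ D.trace K a) (hb : z ∈ D.trace K b) :
    K.Reachable a b := by
  rcases ha with ⟨u, hu, rfl⟩ | ⟨g, hgK, ⟨u, hug, hu⟩, t, ht, rfl⟩ <;>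
    rcases hb with ⟨v, hv, hvu⟩ | ⟨k, -, ⟨v, hvk, hv⟩, s, hs, hst⟩
  · obtain rfl := D.vinj hvu
    exact hu.trans hv.symm
  · exact absurd hst (D.interiorAvoidsVertices k u s hs)
  · exact absurd hvu.symm (D.interiorAvoidsVertices g v t ht)
  · by_cases hgk : g = k
    · subst hgk
      refine hu.trans (Reachable.trans ?_ hv.symm)
      by_cases huv : u = v
      · rw [huv]
      · rw [(Sym2.mem_and_mem_iff huv).1 ⟨hug, hvk⟩] at hgK
        exact Adj.reachable hgK
    · exact absurd ⟨⟨t, ht, rfl⟩, ⟨s, hs, hst⟩⟩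
        (Set.eq_empty_iff_forall_notMem.1 (hD g k hgk) (D.arc g t))

/-- Chains outside a disc whose ends interlace on the boundary circle intersect. -/
theorem Drawing.IsPlanar.reachable_of_side_mul_side_neg {D : Drawing H} (hD : D.IsPlanar)
    {K : SimpleGraph W} (hK : K ≤ H) {p : ℝ × ℝ} {r : ℝ} (hr : 0 < r)
    (hvert : ∀ v, r ^ 2 ≤ sqDist p (D.vpos v))
    (hedge : ∀ g : H.edgeSet, g.1 ∈ K.edgeSet → ∀ t ∈ Set.Icc (0 : ℝ) 1,
      r ^ 2 ≤ sqDist p (D.arc g t)) {a b c d : W}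
    (ha : sqDist p (D.vpos a) = r ^ 2) (hb : sqDist p (D.vpos b) = r ^ 2)
    (hc : sqDist p (D.vpos c) = r ^ 2) (hd : sqDist p (D.vpos d) = r ^ 2)
    (hside : side (D.vpos a) (D.vpos b) (D.vpos c) *
      side (D.vpos a) (D.vpos b) (D.vpos d) < 0)
    (hab : K.Reachable a b) (hcd : K.Reachable c d) : K.Reachable a c := by
  have hout (u : W) (z) (hz : z ∈ D.trace K u) : r ^ 2 ≤ sqDist p z := by
    rcases hz with ⟨v, -, rfl⟩ | ⟨g, hg, -, t, ht, rfl⟩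
    · exact hvert v
    · exact hedge g hg t ⟨ht.1.le, ht.2.le⟩
  have hP := D.joinedIn_trace hK hab
  have hQ := D.joinedIn_trace hK hcd
  obtain ⟨s, t, hst⟩ := paths_outside_disc_meet hr ha hb hc hd hside hP.somePath hQ.somePath
    (fun t => hout a _ (hP.somePath_mem t)) (fun t => hout c _ (hQ.somePath_mem t))
  exact hD.reachable_of_mem_trace (hP.somePath_mem s) (hst ▸ hQ.somePath_mem t)

end Chains

section Main

variable {V : Type*} {G : SimpleGraph V} {en : Fin 4 → V}

/-- A three-edge-colouring of `uncross G en` colours the four pendant edges in pairs. -/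
theorem pendantColor_cases {col : Sym2 (V ⊕ Fin 4) → Fin 3}
    (hcol : ∀ x y z, (uncross G en).Adj x y → (uncross G en).Adj x z → y ≠ z →
      col s(x, y) ≠ col s(x, z)) :
    (∀ i, pendantColor en col (i + 2) = pendantColor en col i) ∨
      pendantColor en col 0 ≠ pendantColor en col 2 ∧
      pendantColor en col 1 ≠ pendantColor en col 3 ∧
      ∀ i, pendantColor en col i = pendantColor en col 0 ∨
        pendantColor en col i = pendantColor en col 2 := by
  have key (i : Fin 4) : pendantColor en col i ≠ col s(.inr i, .inr (i + 1)) ∧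
      pendantColor en col (i + 1) ≠ col s(.inr i, .inr (i + 1)) ∧
      col s(.inr i, .inr (i + 1)) ≠ col s(.inr (i + 1), .inr (i + 1 + 1)) := by
    refine ⟨?_, ?_, ?_⟩
    · rw [pendantColor, Sym2.eq_swap]
      exact hcol _ _ _ (uncross_adj_inr_inl.2 rfl) (Or.inl rfl) (by simp)
    · rw [pendantColor, Sym2.eq_swap, Sym2.eq_swap (a := Sum.inr i)]
      exact hcol _ _ _ (uncross_adj_inr_inl.2 rfl) (Or.inr rfl) (by simp)
    · rw [Sym2.eq_swap]
      refine hcol _ _ _ (Or.inr rfl) (Or.inl rfl) ?_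
      rw [Ne, Sum.inr.injEq]
      decide +revert
  have tab : ∀ k0 k1 : Fin 3, k0 ≠ k1 → ∀ k2, k1 ≠ k2 → ∀ k3, k2 ≠ k3 → k3 ≠ k0 →
      ∀ q0, q0 ≠ k0 → q0 ≠ k3 → ∀ q1, q1 ≠ k1 → q1 ≠ k0 → ∀ q2, q2 ≠ k2 → q2 ≠ k1 →
      ∀ q3, q3 ≠ k3 → q3 ≠ k2 → (q2 = q0 ∧ q3 = q1) ∨
        q0 ≠ q2 ∧ q1 ≠ q3 ∧ (q1 = q0 ∨ q1 = q2) ∧ (q3 = q0 ∨ q3 = q2) := by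
    intros
    omega
  obtain ⟨q00, q10, k01⟩ := key 0
  obtain ⟨q11, q21, k12⟩ := key 1
  obtain ⟨q22, q32, k23⟩ := key 2
  obtain ⟨q33, q03, k30⟩ := key 3
  refine (tab _ _ k01 _ k12 _ k23 k30 _ q00 q03 _ q11 q10 _ q22 q21 _ q33 q32).imp ?_ ?_
  · rintro ⟨h0, h1⟩ i
    fin_cases i
    exacts [h0, h1, h0.symm, h1.symm]
  · rintro ⟨h0, h1, h2, h3⟩
    refine ⟨h0, h1, fun i => ?_⟩
    fin_cases i
    exacts [Or.inl rfl, h2, Or.inr rfl, h3]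

theorem colorGraph_eq_or_eq_or_eq {col : Sym2 (V ⊕ Fin 4) → Fin 3}
    (hcol : IsOuterColoring G en col) {x y : Fin 3} (u a b c : V ⊕ Fin 4)
    (ha : (colorGraph G en col {x, y}).Adj u a) (hb : (colorGraph G en col {x, y}).Adj u b)
    (hc : (colorGraph G en col {x, y}).Adj u c) : a = b ∨ b = c ∨ a = c := by
  rcases u with v | i
  · by_contra! hne
    have h1 := hcol v a b ha.1 hb.1 hne.1
    have h2 := hcol v b c hb.1 hc.1 hne.2.1
    have h3 := hcol v a c ha.1 hc.1 hne.2.2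
    rcases ha.2.2 with ha | ha <;> rcases hb.2.2 with hb | hb <;> rcases hc.2.2 with hc | hc <;>
      simp_all
  · exact Or.inl ((colorGraph_adj_inr.1 ha).1.trans (colorGraph_adj_inr.1 hb).1.symm)

/-- If the colours of opposite pendant edges differ, then Kempe exchanges make them equal, since
otherwise two disjoint Kempe chains would cross in the plane. -/
theorem IsOuterColoring.threeEdgeColorable_of_isPlanar [Fintype V]
    {col : Sym2 (V ⊕ Fin 4) → Fin 3} (hcol : IsOuterColoring G en col)
    (h3 : ∀ x, ((uncross G en).neighborSet x).ncard = 3) {p : ℝ × ℝ} {r : ℝ} (hr : 0 < r)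
    {D : Drawing (uncross G en)} (hD : D.IsPlanar) (hvert : ∀ v, r ^ 2 ≤ sqDist p (D.vpos v))
    (hedge : ∀ g : (uncross G en).edgeSet, (∃ u, .inl u ∈ g.1) → ∀ t ∈ Set.Icc (0 : ℝ) 1,
      r ^ 2 ≤ sqDist p (D.arc g t))
    (hcirc : ∀ i, sqDist p (D.vpos (.inr i)) = r ^ 2)
    (hside : side (D.vpos (.inr 0)) (D.vpos (.inr 2)) (D.vpos (.inr 1)) *
      side (D.vpos (.inr 0)) (D.vpos (.inr 2)) (D.vpos (.inr 3)) < 0)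
    (h02 : pendantColor en col 0 ≠ pendantColor en col 2)
    (h13 : pendantColor en col 1 ≠ pendantColor en col 3)
    (hpair : ∀ i, pendantColor en col i = pendantColor en col 0 ∨
      pendantColor en col i = pendantColor en col 2) : ThreeEdgeColorable G := by
  let K := colorGraph G en col {pendantColor en col 0, pendantColor en col 2}
  have hswap (a : V ⊕ Fin 4) := hcol.exists_swap (x := pendantColor en col 0)
    (y := pendantColor en col 2) (C := {z | K.Reachable a z})
    fun u v huv hu => Reachable.trans hu (Adj.reachable huv)
  by_cases hK02 : K.Reachable (.inr 0) (.inr 2)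
  swap
  · obtain ⟨col', hcol', hin, hnot⟩ := hswap (.inr 0)
    have h0 : pendantColor en col' 2 = pendantColor en col' 0 := by
      rw [hin 0 .rfl, hnot 2 hK02, Equiv.swap_apply_left]
    have h1 := ((hcol'.pendantColor_eq_iff h3).1 h0.symm).symm
    refine hcol'.threeEdgeColorable fun i => ?_
    fin_cases i
    exacts [h0, h1, h0.symm, h1.symm]
  exfalso
  have hleaf (i : Fin 4) (v w) (hv : K.Adj (.inr i) v) (hw : K.Adj (.inr i) w) : v = w :=
    (colorGraph_adj_inr.1 hv).1.trans (colorGraph_adj_inr.1 hw).1.symm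
  have hK01 : ¬ K.Reachable (.inr 0) (.inr 1) := by
    intro h01
    have := eq_or_eq_of_reachable (colorGraph_eq_or_eq_or_eq hcol) (by simp) hK02 h01 (by
      rintro z (rfl | rfl | rfl)
      exacts [hleaf 0, hleaf 2, hleaf 1])
    simp at this
  have hK13 : K.Reachable (.inr 1) (.inr 3) := by
    by_contra hK13
    obtain ⟨col', hcol', hin, hnot⟩ := hswap (.inr 1)
    have h0 : pendantColor en col' 0 ≠ pendantColor en col' 2 := by
      rwa [hnot 0 fun h => hK01 h.symm, hnot 2 fun h => hK01 (hK02.trans h.symm)]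
    refine h0 ((hcol'.pendantColor_eq_iff h3).2 ?_)
    rw [hin 1 .rfl, hnot 3 hK13]
    rcases hpair 1 with h1 | h1 <;> rcases hpair 3 with h2 | h2
    · exact absurd (h1.trans h2.symm) h13
    · rw [h1, h2, Equiv.swap_apply_left]
    · rw [h1, h2, Equiv.swap_apply_right]
    · exact absurd (h1.trans h2.symm) h13
  have hKle : K ≤ uncross G en := fun u v (h : (colorGraph G en col _).Adj u v) => h.1
  refine hK01 (hD.reachable_of_side_mul_side_neg hKle hr hvert (fun g hg => ?_)
    (hcirc 0) (hcirc 2) (hcirc 1) (hcirc 3) hside hK02 hK13)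
  refine hedge g ?_
  obtain ⟨g, hg'⟩ := g
  induction g with
  | h a b =>
    obtain ⟨-, hl, -⟩ := hg
    rcases a with u | i
    · exact ⟨u, by simp⟩
    · rcases b with u | j
      · exact ⟨u, by simp⟩
      · simp at hl

end Main

/-- Jaeger's theorem, \ref{onecrossing}: assuming the four-colour theorem
(every two-edge-connected cubic planar graph is three-edge-colourable), every
two-edge-connected cubic graph drawn in the plane with exactly one crossing is
three-edge-colourable. -/
theorem onecrossing_three_edge_colourable
    (fourCT : ∀ (W : Type) [Fintype W] (H : SimpleGraph W) [DecidableRel H.Adj],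
        (∀ w, H.degree w = 3) → TwoEdgeConnected H → IsPlanarGraph H →
        ThreeEdgeColorable H)
    {V : Type} [Fintype V] (G : SimpleGraph V) [DecidableRel G.Adj]
    (hcubic : ∀ v, G.degree v = 3)
    (h2ec : TwoEdgeConnected G)
    (hdraw : ∃ d : Drawing G, d.OneCrossing) :
    ThreeEdgeColorable G := by
  classical
  obtain ⟨d, hd⟩ := hdraw
  obtain ⟨en, p, r, pend, hM⟩ := hd.exists_crossingModel
  rcases hM.isPlanarGraph_or_side_mul_side_neg with hpl | hside
  · exact fourCT V G hcubic h2ec hpl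
  obtain ⟨D, hD, hDpos, hDvert, hDedge⟩ := hM.exists_planar_drawing hside
  have hE := hM.toIsEdgePair
  have h3 : ∀ x, ((uncross G en).neighborSet x).ncard = 3 :=
    hE.ncard_neighborSet_uncross fun v => by
      rw [← hcubic v, ← card_neighborSet_eq_degree, ← Nat.card_eq_fintype_card,
        Nat.card_coe_set_eq]
  obtain ⟨c, hc⟩ := fourCT (V ⊕ Fin 4) (uncross G en)
    (fun x => by rw [← h3 x, ← card_neighborSet_eq_degree, ← Nat.card_eq_fintype_card,
      Nat.card_coe_set_eq]) (hE.twoEdgeConnected_uncross h2ec) ⟨D, hD⟩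
  obtain ⟨col, hcol⟩ : ∃ col : Sym2 (V ⊕ Fin 4) → Fin 3, ∀ x y z, (uncross G en).Adj x y →
      (uncross G en).Adj x z → y ≠ z → col s(x, y) ≠ col s(x, z) := by
    refine ⟨fun e => if he : e ∈ (uncross G en).edgeSet then c ⟨e, he⟩ else 0,
      fun x y z hy hz hyz => ?_⟩
    beta_reduce
    rw [dif_pos (show s(x, y) ∈ (uncross G en).edgeSet from hy),
      dif_pos (show s(x, z) ∈ (uncross G en).edgeSet from hz)]
    refine hc _ _ (fun e => hyz ?_) ⟨x, by simp, by simp⟩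
    exact Sym2.congr_right.1 (congrArg Subtype.val e)
  have hout : IsOuterColoring G en col := fun v y z => hcol _ y z
  rcases pendantColor_cases hcol with hq | ⟨h02, h13, hpair⟩
  · exact hout.threeEdgeColorable hq
  exact hout.threeEdgeColorable_of_isPlanar h3 hM.radius_pos hD hDvert hDedge
    (fun i => by rw [hDpos]; exact (hM.pendant i).finish)
    (by simp only [hDpos]; exact hside 0) h02 h13 hpair
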